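/- arXiv:math/0605045 — 2 statements merged into one kernel-verified Lean document; each statement's English description precedes it below -/
import Mathlib

section
/- Suppose the spectral parameter λ lies in a (i.e. λ is real). Then the Opdam function G_λ is real-valued and strictly positive at every point of a; consequently the Heckman–Opdam hypergeometric function F_λ is strictly positive on a. -/
open scoped BigOperators RealInnerProductSpace Classical

noncomputable section

variable {E : Type*} [NormedAddCommGroup E] [InnerProductSpace ℝ E] [FiniteDimensional ℝ E]

/-- The coroot `α∨ = 2α/|α|²`. -/
def coroot (α : E) : E := (2 / ⟪α, α⟫) • α

/-- The orthogonal reflection `r_α x = x - (α∨, x) α`. -/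
def rRefl (α : E) (x : E) : E := x - ⟪coroot α, x⟫ • α

/-- Data of an integral root system with positive subsystem and
a Weyl-invariant positive multiplicity function. -/
structure HOData (E : Type*) [NormedAddCommGroup E] [InnerProductSpace ℝ E] : Type _ where
  R : Finset E
  Rpos : Finset E
  k : E → ℝ
  k_pos : ∀ α ∈ R, 0 < k α
  root_ne_zero : ∀ α ∈ R, α ≠ 0
  pos_subset : Rpos ⊆ R
  pos_char : ∃ u : E, ∀ α ∈ R, (α ∈ Rpos ↔ 0 < ⟪α, u⟫)
  pos_or_neg : ∀ α ∈ R, α ∈ Rpos ∨ -α ∈ Rpos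
  neg_mem : ∀ α ∈ R, -α ∈ R
  integral : ∀ α ∈ R, ∀ β ∈ R, ∃ n : ℤ, ⟪coroot α, β⟫ = (n : ℝ)
  refl_mem : ∀ α ∈ R, ∀ β ∈ R, rRefl α β ∈ R
  k_inv : ∀ α ∈ R, ∀ β ∈ R, k (rRefl α β) = k β

/-- The Weyl group: the subgroup of linear isometries generated by the root reflections. -/
def weylGroup (D : HOData E) : Subgroup (E ≃ₗᵢ[ℝ] E) :=
  Subgroup.closure {w : E ≃ₗᵢ[ℝ] E | ∃ α ∈ D.R, ∀ x, w x = rRefl α x}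

/-- `ρ = (1/2) Σ_{α ∈ R⁺} k_α α`. -/
def rhoHO (D : HOData E) : E := (2:ℝ)⁻¹ • ∑ α ∈ D.Rpos, D.k α • α

/-- Regular points. -/
def HORegular (D : HOData E) (x : E) : Prop := ∀ α ∈ D.R, ⟪α, x⟫ ≠ 0

/-- The (open) positive Weyl chamber. -/
def posChamber (D : HOData E) : Set E := {x | ∀ α ∈ D.Rpos, 0 < ⟪α, x⟫}

/-- The positive indivisible roots `R₀⁺`. -/
def Rpos0 (D : HOData E) : Finset E := D.Rpos.filter (fun α => (2:ℝ)⁻¹ • α ∉ D.R)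

/-- The Opdam function `G_λ` for a real parameter `λ`: an analytic function,
normalized at `0`, satisfying the Cherednik differential-difference system. -/
def IsOpdamR (D : HOData E) (lam : E) (G : E → ℝ) : Prop :=
  AnalyticOnNhd ℝ G Set.univ ∧ G 0 = 1 ∧
  ∀ ξ x, HORegular D x →
    fderiv ℝ G x ξ =
      (∑ α ∈ D.Rpos, D.k α * ⟪α, ξ⟫ / (1 - Real.exp (-⟪α, x⟫)) * (G (rRefl α x) - G x))
      + ⟪rhoHO D + lam, ξ⟫ * G x

/-- The Opdam function `G_λ` for a complex parameter `λ = l1 + i l2 ∈ h`. -/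
def IsOpdamC (D : HOData E) (l1 l2 : E) (G : E → ℂ) : Prop :=
  AnalyticOnNhd ℝ G Set.univ ∧ G 0 = 1 ∧
  ∀ ξ x, HORegular D x →
    fderiv ℝ G x ξ =
      (∑ α ∈ D.Rpos, ((D.k α * ⟪α, ξ⟫ / (1 - Real.exp (-⟪α, x⟫)) : ℝ) : ℂ)
          * (G (rRefl α x) - G x))
      + (((⟪rhoHO D + l1, ξ⟫ : ℝ) : ℂ) + Complex.I * ((⟪l2, ξ⟫ : ℝ) : ℂ)) * G x

/-- The symmetrization `F(x) = |W|⁻¹ Σ_{w ∈ W} G(w x)` (real valued case). -/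
def Fsym (D : HOData E) [Fintype (weylGroup D)] (G : E → ℝ) (x : E) : ℝ :=
  (Fintype.card (weylGroup D) : ℝ)⁻¹ * ∑ w : weylGroup D, G (w.1 x)

/-- The symmetrization `F(x) = |W|⁻¹ Σ_{w ∈ W} G(w x)` (complex valued case). -/
def FsymC (D : HOData E) [Fintype (weylGroup D)] (G : E → ℂ) (x : E) : ℂ :=
  (Fintype.card (weylGroup D) : ℂ)⁻¹ * ∑ w : weylGroup D, G (w.1 x)

/-- `max_{w ∈ W} (w λ, x)`. -/
def maxW (D : HOData E) [Fintype (weylGroup D)] (lam x : E) : ℝ :=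
  ⨆ w : weylGroup D, ⟪w.1 lam, x⟫

/-- The continuous extension of `s ↦ s / (1 - exp (-s))` to the whole real line. -/
def radialWeight (s : ℝ) : ℝ := (dslope (fun s : ℝ => 1 - Real.exp (-s)) 0 s)⁻¹

lemma radialWeight_of_ne {s : ℝ} (hs : s ≠ 0) :
    radialWeight s = s / (1 - Real.exp (-s)) := by
  simp [radialWeight, dslope_of_ne _ hs, slope_def_field]

lemma hasDerivAt_one_sub_exp_neg_zero :
    HasDerivAt (fun s : ℝ => 1 - Real.exp (-s)) 1 0 := by
  simpa using ((hasDerivAt_neg (0 : ℝ)).exp).const_sub 1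

lemma radialWeight_pos (s : ℝ) : 0 < radialWeight s := by
  rcases lt_trichotomy s 0 with hs | rfl | hs
  · rw [radialWeight_of_ne hs.ne]
    have : 1 < Real.exp (-s) := Real.one_lt_exp_iff.2 (by linarith)
    exact div_pos_of_neg_of_neg hs (by linarith)
  · simp [radialWeight, dslope_same, hasDerivAt_one_sub_exp_neg_zero.deriv]
  · rw [radialWeight_of_ne hs.ne']
    have : Real.exp (-s) < 1 := Real.exp_lt_one_iff.2 (by linarith)
    exact div_pos hs (by linarith)

lemma continuous_radialWeight : Continuous radialWeight := by
  have hd : Continuous (dslope (fun s : ℝ => 1 - Real.exp (-s)) 0) := by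
    rw [← continuousOn_univ, continuousOn_dslope Filter.univ_mem]
    exact ⟨by fun_prop, hasDerivAt_one_sub_exp_neg_zero.differentiableAt⟩
  exact hd.inv₀ fun s => fun h => (radialWeight_pos s).ne' (by rw [radialWeight, h, inv_zero])

lemma norm_rRefl (α x : E) : ‖rRefl α x‖ = ‖x‖ := by
  by_cases hα : α = 0
  · simp [rRefl, hα]
  have h : ⟪α, α⟫ ≠ 0 := inner_self_ne_zero.2 hα
  have hsq : ⟪rRefl α x, rRefl α x⟫ = ⟪x, x⟫ := by
    simp only [rRefl, coroot, inner_sub_left, inner_sub_right, real_inner_smul_left,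
      real_inner_smul_right, real_inner_comm α x]
    field_simp
    ring
  simpa [real_inner_self_eq_norm_sq] using hsq

lemma continuous_rRefl (α : E) : Continuous (rRefl α) := by
  unfold rRefl
  fun_prop

lemma dense_HORegular (D : HOData E) : Dense {x : E | HORegular D x} := by
  obtain ⟨u, hu⟩ := D.pos_char
  have hureg : ∀ α ∈ D.R, ⟪α, u⟫ ≠ 0 := by
    intro α hα
    rcases D.pos_or_neg α hα with h | h
    · exact ((hu α hα).1 h).ne'
    · have := (hu _ (D.neg_mem α hα)).1 h
      rw [inner_neg_left] at this
      linarith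
  intro x
  have hlim : Filter.Tendsto (fun t : ℝ => x + t • u) (nhdsWithin 0 {0}ᶜ) (nhds x) := by
    have : Continuous fun t : ℝ => x + t • u := by fun_prop
    simpa using (this.tendsto 0).mono_left nhdsWithin_le_nhds
  refine mem_closure_of_tendsto hlim ?_
  have hev : ∀ α ∈ D.R, ∀ᶠ t : ℝ in nhdsWithin 0 {0}ᶜ, ⟪α, x + t • u⟫ ≠ 0 := by
    intro α hα
    simp only [inner_add_right, real_inner_smul_right]
    by_cases hx : ⟪α, x⟫ = 0
    · filter_upwards [self_mem_nhdsWithin] with t ht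
      simpa [hx, hureg α hα] using ht
    · have hc : Continuous fun t : ℝ => ⟪α, x⟫ + t * ⟪α, u⟫ := by fun_prop
      exact nhdsWithin_le_nhds (hc.continuousAt.eventually_ne (by simpa using hx))
  exact (Filter.eventually_all_finset D.R).2 hev

/-- In the radial direction the Cherednik system extends to singular points, with positive
continuous coefficients. -/
lemma radial_equation (D : HOData E) (lam : E) {g : E → ℝ} (hg : ContDiff ℝ 1 g)
    (heq : ∀ ξ x, HORegular D x → fderiv ℝ g x ξ =
      (∑ α ∈ D.Rpos, D.k α * ⟪α, ξ⟫ / (1 - Real.exp (-⟪α, x⟫)) * (g (rRefl α x) - g x))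
      + ⟪rhoHO D + lam, ξ⟫ * g x) (x : E) :
    fderiv ℝ g x x =
      (∑ α ∈ D.Rpos, D.k α * radialWeight ⟪α, x⟫ * (g (rRefl α x) - g x))
      + ⟪rhoHO D + lam, x⟫ * g x := by
  have hgc := hg.continuous
  have hleft : Continuous fun x => fderiv ℝ g x x :=
    (hg.continuous_fderiv one_ne_zero).clm_apply continuous_id
  have hright : Continuous fun x =>
      (∑ α ∈ D.Rpos, D.k α * radialWeight ⟪α, x⟫ * (g (rRefl α x) - g x))
      + ⟪rhoHO D + lam, x⟫ * g x := by
    have hw := continuous_radialWeight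
    have hr := continuous_rRefl (E := E)
    fun_prop
  refine congrFun (hleft.ext_on (dense_HORegular D) hright ?_) x
  intro y hy
  simp only [heq y y hy]
  congr 1
  refine Finset.sum_congr rfl fun α hα => ?_
  rw [radialWeight_of_ne (hy α (D.pos_subset hα)), mul_div_assoc]

lemma pos_of_cherednik_system (D : HOData E) (lam : E) {g : E → ℝ} (hg : ContDiff ℝ 1 g)
    (h0 : 0 < g 0)
    (heq : ∀ ξ x, HORegular D x → fderiv ℝ g x ξ =
      (∑ α ∈ D.Rpos, D.k α * ⟪α, ξ⟫ / (1 - Real.exp (-⟪α, x⟫)) * (g (rRefl α x) - g x))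
      + ⟪rhoHO D + lam, ξ⟫ * g x) (x : E) : 0 < g x := by
  have hrad := radial_equation D lam hg heq
  have hgc := hg.continuous
  by_contra hx
  have hclosed : IsClosed {y | g y ≤ 0} := isClosed_le hgc continuous_const
  obtain ⟨z, hz, hzmin⟩ := hclosed.exists_infDist_eq_dist ⟨x, not_lt.1 hx⟩ (0 : E)
  have hball : ∀ y, ‖y‖ < ‖z‖ → 0 < g y := by
    intro y hy
    by_contra hgy
    have hmem : y ∈ {y | g y ≤ 0} := not_lt.1 hgy
    have hle := Metric.infDist_le_dist_of_mem (x := (0 : E)) hmem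
    rw [hzmin, dist_zero_left, dist_zero_left] at hle
    linarith
  have hz0 : 0 < ‖z‖ := by
    rw [norm_pos_iff]
    rintro rfl
    exact absurd hz (not_le.2 h0)
  set b : ℝ → ℝ := fun t =>
    (-(∑ α ∈ D.Rpos, D.k α * radialWeight ⟪α, t • z⟫) + ⟪rhoHO D + lam, t • z⟫) / t with hb
  have hbc : ContinuousOn b (Set.Icc (1 / 2) 1) := by
    have hw := continuous_radialWeight
    refine ContinuousOn.div (by fun_prop) continuousOn_id fun t ht => ?_
    have := ht.1
    exact ne_of_gt (by linarith)
  obtain ⟨C, hC⟩ := isCompact_Icc.bddBelow_image hbc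
  have hderiv : ∀ t : ℝ, HasDerivAt (fun t : ℝ => g (t • z) * Real.exp (-C * t))
      (fderiv ℝ g (t • z) z * Real.exp (-C * t)
        + g (t • z) * (Real.exp (-C * t) * -C)) t := by
    intro t
    have h1 : HasDerivAt (fun t : ℝ => t • z) z t := by
      simpa using (hasDerivAt_id t).smul_const z
    have h2 : HasDerivAt (fun t : ℝ => g (t • z)) (fderiv ℝ g (t • z) z) t :=
      ((hg.differentiable one_ne_zero (t • z)).hasFDerivAt).comp_hasDerivAt t h1
    have h3 : HasDerivAt (fun t : ℝ => -C * t) (-C) t := by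
      simpa using (hasDerivAt_id t).const_mul (-C)
    exact h2.mul h3.exp
  have hmono : MonotoneOn (fun t : ℝ => g (t • z) * Real.exp (-C * t)) (Set.Icc (1 / 2) 1) := by
    refine monotoneOn_of_deriv_nonneg (convex_Icc _ _)
      (fun t _ => (hderiv t).continuousAt.continuousWithinAt)
      (fun t _ => (hderiv t).differentiableAt.differentiableWithinAt) ?_
    intro t ht
    rw [interior_Icc] at ht
    have ht0 : 0 < t := by linarith [ht.1]
    have hnorm : ‖t • z‖ < ‖z‖ := by
      rw [norm_smul, Real.norm_of_nonneg ht0.le]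
      nlinarith [ht.2]
    have hgt := hball _ hnorm
    have hCt : C ≤ b t := hC ⟨t, ⟨ht.1.le, ht.2.le⟩, rfl⟩
    have hsum : -(∑ α ∈ D.Rpos, D.k α * radialWeight ⟪α, t • z⟫) * g (t • z) ≤
        ∑ α ∈ D.Rpos, D.k α * radialWeight ⟪α, t • z⟫ * (g (rRefl α (t • z)) - g (t • z)) := by
      rw [← Finset.sum_neg_distrib, Finset.sum_mul]
      refine Finset.sum_le_sum fun α hα => ?_
      have hc := mul_pos (D.k_pos α (D.pos_subset hα)) (radialWeight_pos ⟪α, t • z⟫)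
      have hr := hball (rRefl α (t • z)) (by rwa [norm_rRefl])
      nlinarith [mul_pos hc hr]
    have hbt : b t * t * g (t • z) ≤ t * fderiv ℝ g (t • z) z := by
      have h := hrad (t • z)
      rw [map_smul, smul_eq_mul] at h
      rw [h, hb, div_mul_cancel₀ _ ht0.ne', add_mul]
      linarith
    have hmain : C * g (t • z) ≤ fderiv ℝ g (t • z) z := by
      refine le_of_mul_le_mul_left (le_trans ?_ hbt) ht0
      nlinarith [mul_le_mul_of_nonneg_right hCt (mul_pos ht0 hgt).le]
    rw [(hderiv t).deriv]
    nlinarith [mul_le_mul_of_nonneg_right hmain (Real.exp_pos (-C * t)).le]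
  have hhalf : 0 < g ((1 / 2 : ℝ) • z) := hball _ (by
    rw [norm_smul, Real.norm_of_nonneg (by norm_num)]
    linarith)
  have hle := hmono (Set.left_mem_Icc.2 (by norm_num)) (Set.right_mem_Icc.2 (by norm_num))
    (by norm_num : (1 / 2 : ℝ) ≤ 1)
  have hz' : g z ≤ 0 := hz
  simp only [one_smul] at hle
  nlinarith [mul_pos hhalf (Real.exp_pos (-C * (1 / 2))),
    mul_nonneg (neg_nonneg.2 hz') (Real.exp_pos (-C * 1)).le]

lemma IsOpdamC.re_add_mul_im_pos {D : HOData E} {lam : E} {G : E → ℂ}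
    (hG : IsOpdamC D lam 0 G) (c : ℝ) (x : E) : 0 < (G x).re + c * (G x).im := by
  obtain ⟨han, h0, heq⟩ := hG
  have hGd : ContDiff ℝ 1 G := contDiffOn_univ.1 (han.contDiffOn uniqueDiffOn_univ)
  set L : ℂ →L[ℝ] ℝ := Complex.reCLM + c • Complex.imCLM with hL
  have hLmul : ∀ (r : ℝ) (z : ℂ), L (r * z) = r * L z := fun r z => by
    rw [← Complex.real_smul, map_smul, smul_eq_mul]
  refine pos_of_cherednik_system D lam (g := fun y => L (G y)) (L.contDiff.comp hGd)
    (by simp [hL, h0]) ?_ x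
  intro ξ y hy
  have hfd : fderiv ℝ (fun y => L (G y)) y = L.comp (fderiv ℝ G y) :=
    (L.hasFDerivAt.comp y (hGd.differentiable one_ne_zero y).hasFDerivAt).fderiv
  rw [hfd, ContinuousLinearMap.comp_apply, heq ξ y hy]
  simp only [inner_zero_left, Complex.ofReal_zero, mul_zero, add_zero, map_add, map_sum, hLmul,
    map_sub]

/-- for a real spectral parameter `λ ∈ a`, the Opdam function `G_λ` is
real-valued and strictly positive on `a`; consequently `F_λ` is strictly positive on `a`. -/
theorem statement0 (D : HOData E) [Fintype (weylGroup D)] (lam : E) (G : E → ℂ)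
    (hG : IsOpdamC D lam 0 G) :
    (∀ x : E, (G x).im = 0 ∧ 0 < (G x).re) ∧
    (∀ x : E, (FsymC D G x).im = 0 ∧ 0 < (FsymC D G x).re) := by
  have him : ∀ x, (G x).im = 0 := by
    intro x
    by_contra h
    have hpos := hG.re_add_mul_im_pos (-(G x).re / (G x).im) x
    rw [div_mul_cancel₀ _ h] at hpos
    linarith
  have hre : ∀ x, 0 < (G x).re := fun x => by simpa using hG.re_add_mul_im_pos 0 x
  have hGre : ∀ x, G x = ((G x).re : ℂ) := fun x => Complex.ext rfl (by simp [him x])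
  refine ⟨fun x => ⟨him x, hre x⟩, fun x => ?_⟩
  have hF : FsymC D G x = (Fsym D (fun y => (G y).re) x : ℂ) := by
    rw [FsymC, Fsym, Finset.sum_congr rfl fun w _ => hGre (w.1 x)]
    push_cast
    rfl
  rw [hF]
  refine ⟨Complex.ofReal_im _, ?_⟩
  rw [Complex.ofReal_re, Fsym]
  exact mul_pos (inv_pos.2 (by exact_mod_cast Fintype.card_pos))
    (Finset.sum_pos (fun w _ => hre _) Finset.univ_nonempty)
end
end

section
/- There exist constants C ≥ c > 0 such that for every x in the closed positive Weyl chamber ā₊, c · e^{−(ρ,x)} Π_{α∈R₀⁺} (1 + (α,x)) ≤ F_0(x) ≤ C · e^{−(ρ,x)} Π_{α∈R₀⁺} (1 + (α,x)). -/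
open scoped BigOperators RealInnerProductSpace Classical

noncomputable section

variable {E : Type*} [NormedAddCommGroup E] [InnerProductSpace ℝ E] [FiniteDimensional ℝ E]

set_option linter.unusedSectionVars false

section Reflection

lemma inner_coroot_left (α x : E) : ⟪coroot α, x⟫ = 2 / ⟪α, α⟫ * ⟪α, x⟫ := by
  simp [coroot, inner_smul_left]

lemma inner_rRefl_right (α x y : E) :
    ⟪y, rRefl α x⟫ = ⟪y, x⟫ - 2 / ⟪α, α⟫ * ⟪α, x⟫ * ⟪y, α⟫ := by
  simp [rRefl, inner_sub_right, inner_smul_right, inner_coroot_left]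

lemma inner_rRefl_left (α x y : E) : ⟪rRefl α x, y⟫ = ⟪x, rRefl α y⟫ := by
  rw [real_inner_comm, inner_rRefl_right, inner_rRefl_right, real_inner_comm x y,
    real_inner_comm α y, real_inner_comm x α]
  ring

lemma rRefl_self {α : E} (hα : α ≠ 0) : rRefl α α = -α := by
  have h : ⟪α, α⟫ ≠ 0 := inner_self_ne_zero.2 hα
  rw [rRefl, inner_coroot_left, div_mul_cancel₀ _ h, two_smul]
  abel

lemma rRefl_smul (α x : E) (c : ℝ) : rRefl α (c • x) = c • rRefl α x := by
  simp only [rRefl, inner_smul_right, smul_sub, smul_smul]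

lemma rRefl_neg (α x : E) : rRefl α (-x) = -rRefl α x := by
  simpa using rRefl_smul α x (-1)

lemma rRefl_rRefl {α : E} (hα : α ≠ 0) (x : E) : rRefl α (rRefl α x) = x := by
  have h : ⟪α, α⟫ ≠ 0 := inner_self_ne_zero.2 hα
  have h2 : ⟪coroot α, rRefl α x⟫ = -⟪coroot α, x⟫ := by
    rw [inner_coroot_left, inner_coroot_left, inner_rRefl_right]
    field_simp
    ring
  conv_lhs => rw [rRefl, h2]
  rw [rRefl]
  module

lemma rRefl_smul_left {c : ℝ} (hc : c ≠ 0) (α x : E) : rRefl (c • α) x = rRefl α x := by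
  simp only [rRefl, inner_coroot_left, inner_smul_left, inner_smul_right, smul_smul,
    conj_trivial]
  congr 2
  rcases eq_or_ne α 0 with rfl | h
  · simp
  · have h0 : ⟪α, α⟫ ≠ 0 := inner_self_ne_zero.2 h
    field_simp

/-- The reflection `r_α` as a linear isometry. -/
def rReflEquiv (α : E) : E ≃ₗᵢ[ℝ] E := Submodule.reflection (ℝ ∙ α)ᗮ

lemma rReflEquiv_apply (α x : E) : rReflEquiv α x = rRefl α x := by
  rw [rReflEquiv, Submodule.reflection_orthogonal_apply, Submodule.reflection_singleton_apply,
    rRefl, inner_coroot_left, real_inner_self_eq_norm_sq]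
  simp only [RCLike.ofReal_real_eq_id, id_eq]
  module

lemma map_rRefl (w : E ≃ₗᵢ[ℝ] E) (α x : E) : w (rRefl α x) = rRefl (w α) (w x) := by
  simp [rRefl, inner_coroot_left]

end Reflection

namespace HOData

section Roots

variable (D : HOData E)

lemma weyl_mem_and_k (w : weylGroup D) (α : E) :
    (w.1 α ∈ D.R ↔ α ∈ D.R) ∧ (α ∈ D.R → D.k (w.1 α) = D.k α) := by
  obtain ⟨w, hw⟩ := w
  revert α
  refine Subgroup.closure_induction
    (p := fun w _ => ∀ α, (w α ∈ D.R ↔ α ∈ D.R) ∧ (α ∈ D.R → D.k (w α) = D.k α))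
    ?_ ?_ ?_ ?_ hw
  · rintro w ⟨β, hβ, h⟩ α
    rw [h]
    refine ⟨⟨fun hα => ?_, D.refl_mem β hβ α⟩, D.k_inv β hβ α⟩
    simpa [rRefl_rRefl (D.root_ne_zero β hβ)] using D.refl_mem β hβ _ hα
  · simp
  · intro v w _ _ hv hw α
    refine ⟨(hv (w α)).1.trans (hw α).1, fun hα => ?_⟩
    exact ((hv (w α)).2 ((hw α).1.2 hα)).trans ((hw α).2 hα)
  · intro w _ hw α
    have e : w (w⁻¹ α) = α := w.apply_symm_apply α
    have h := hw (w⁻¹ α)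
    rw [e] at h
    exact ⟨h.1.symm, fun hα => (h.2 (h.1.1 hα)).symm⟩

lemma weyl_mem_iff (w : weylGroup D) {α : E} : w.1 α ∈ D.R ↔ α ∈ D.R :=
  (D.weyl_mem_and_k w α).1

lemma k_weyl (w : weylGroup D) {α : E} (hα : α ∈ D.R) : D.k (w.1 α) = D.k α :=
  (D.weyl_mem_and_k w α).2 hα

lemma k_neg {α : E} (hα : α ∈ D.R) : D.k (-α) = D.k α := by
  rw [← rRefl_self (D.root_ne_zero α hα), D.k_inv α hα α hα]

lemma weyl_inv_apply (w : weylGroup D) (x : E) : w.1 ((w⁻¹).1 x) = x :=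
  w.1.apply_symm_apply x

lemma weyl_apply_inv (w : weylGroup D) (x : E) : (w⁻¹).1 (w.1 x) = x :=
  w.1.symm_apply_apply x

lemma inner_weyl (w : weylGroup D) (x y : E) : ⟪x, w.1 y⟫ = ⟪(w⁻¹).1 x, y⟫ := by
  rw [← w.1.inner_map_map ((w⁻¹).1 x) y, weyl_inv_apply]

lemma neg_mem_iff {α : E} : -α ∈ D.R ↔ α ∈ D.R :=
  ⟨fun h => by simpa using D.neg_mem _ h, D.neg_mem α⟩

/-- The reflection in a root, as an element of the Weyl group. -/
def weylRefl (α : E) : weylGroup D :=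
  if h : α ∈ D.R then
    ⟨rReflEquiv α, Subgroup.subset_closure ⟨α, h, rReflEquiv_apply α⟩⟩
  else 1

variable {D}

lemma weylRefl_apply {α : E} (hα : α ∈ D.R) (x : E) : (D.weylRefl α).1 x = rRefl α x := by
  simp [weylRefl, hα, rReflEquiv_apply]

lemma weylRefl_mul_apply {α : E} (hα : α ∈ D.R) (w : weylGroup D) (x : E) :
    (D.weylRefl α * w).1 x = rRefl α (w.1 x) :=
  weylRefl_apply hα _

lemma weylRefl_mul_weylRefl_mul {α : E} (hα : α ∈ D.R) (w : weylGroup D) :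
    D.weylRefl α * (D.weylRefl α * w) = w := by
  ext x
  change (D.weylRefl α).1 ((D.weylRefl α).1 (w.1 x)) = w.1 x
  rw [weylRefl_apply hα, weylRefl_apply hα, rRefl_rRefl (D.root_ne_zero α hα)]

variable (D) in
/-- A dominant vector on which every positive root takes a value at least one. -/
lemma exists_dominant : ∃ u : E, ∀ α ∈ D.Rpos, 1 ≤ ⟪α, u⟫ := by
  obtain ⟨u, hu⟩ := D.pos_char
  have hpos : ∀ α ∈ D.Rpos, 0 < ⟪α, u⟫ := fun α hα => (hu α (D.pos_subset hα)).1 hα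
  refine ⟨(∑ β ∈ D.Rpos, ⟪β, u⟫⁻¹) • u, fun α hα => ?_⟩
  rw [inner_smul_right, ← inv_mul_cancel₀ (hpos α hα).ne']
  gcongr
  · exact (hpos α hα).le
  · exact Finset.single_le_sum (f := fun β => ⟪β, u⟫⁻¹)
      (fun β hβ => inv_nonneg.2 (hpos β hβ).le) hα

variable (D) in
lemma posChamber_nonempty : (posChamber D).Nonempty :=
  let ⟨u, hu⟩ := D.exists_dominant
  ⟨u, fun α hα => one_pos.trans_le (hu α hα)⟩

lemma neg_notMem_Rpos {α : E} (hα : α ∈ D.Rpos) : -α ∉ D.Rpos := by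
  obtain ⟨u, hu⟩ := D.posChamber_nonempty
  intro h
  have h1 := hu α hα
  have h2 := hu _ h
  rw [inner_neg_left] at h2
  linarith

lemma mem_Rpos_iff_of_posChamber {x : E} (hx : x ∈ posChamber D) {α : E} (hα : α ∈ D.R) :
    α ∈ D.Rpos ↔ 0 < ⟪α, x⟫ := by
  refine ⟨hx α, fun h => ?_⟩
  rcases D.pos_or_neg α hα with h' | h'
  · exact h'
  · have := hx _ h'
    rw [inner_neg_left] at this
    linarith

lemma inner_neg_of_notMem_Rpos {x : E} (hx : x ∈ posChamber D) {α : E} (hα : α ∈ D.R)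
    (h : α ∉ D.Rpos) : ⟪α, x⟫ < 0 := by
  have := hx _ ((D.pos_or_neg α hα).resolve_left h)
  rw [inner_neg_left] at this
  linarith

lemma posChamber_add {x y : E} (hx : x ∈ posChamber D) (hy : y ∈ posChamber D) :
    x + y ∈ posChamber D := fun α hα => by
  rw [inner_add_right]
  exact add_pos (hx α hα) (hy α hα)

lemma posChamber_add_smul {x y : E} (hx : x ∈ posChamber D) (hy : y ∈ posChamber D) {t : ℝ}
    (ht : 0 ≤ t) : x + t • y ∈ posChamber D := fun α hα => by
  rw [inner_add_right, inner_smul_right]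
  exact add_pos_of_pos_of_nonneg (hx α hα) (mul_nonneg ht (hy α hα).le)

lemma regular_weyl {x : E} (hx : x ∈ posChamber D) (w : weylGroup D) :
    HORegular D (w.1 x) := by
  intro α hα
  rw [inner_weyl]
  have hβ := (D.weyl_mem_iff w⁻¹).2 hα
  by_cases h : (w⁻¹).1 α ∈ D.Rpos
  · exact (hx _ h).ne'
  · exact (inner_neg_of_notMem_Rpos hx hβ h).ne

/-- On the image of the positive chamber under `w`, a root has constant sign. -/
lemma inner_weyl_sign (w : weylGroup D) {α : E} (hα : α ∈ D.R) :
    (∀ x ∈ posChamber D, 0 < ⟪α, w.1 x⟫) ∨ (∀ x ∈ posChamber D, ⟪α, w.1 x⟫ < 0) := by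
  simp only [inner_weyl]
  have hβ := (D.weyl_mem_iff w⁻¹).2 hα
  by_cases h : (w⁻¹).1 α ∈ D.Rpos
  · exact Or.inl fun x hx => hx _ h
  · exact Or.inr fun x hx => inner_neg_of_notMem_Rpos hx hβ h

/-- Products of even functions over a Weyl-stable set of positive roots are Weyl-invariant. -/
@[to_additive]
lemma prod_Rpos_filter_weyl {M : Type*} [CommMonoid M] (p : E → Prop) [DecidablePred p]
    (hp : ∀ (w : weylGroup D) (α : E), p α → p (w.1 α)) (hpn : ∀ α, p α → p (-α))
    (g : E → M) (hg : ∀ α ∈ D.R, g (-α) = g α) (w : weylGroup D) :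
    ∏ α ∈ D.Rpos with p α, g (w.1 α) = ∏ α ∈ D.Rpos with p α, g α := by
  let σ : weylGroup D → E → E := fun w α => if w.1 α ∈ D.Rpos then w.1 α else -w.1 α
  have hσ : ∀ (w : weylGroup D), ∀ α ∈ D.Rpos.filter p, σ w α ∈ D.Rpos.filter p := by
    intro w α hα
    rw [Finset.mem_filter] at hα ⊢
    simp only [σ]
    split_ifs with h
    · exact ⟨h, hp w α hα.2⟩
    · exact ⟨(D.pos_or_neg _ ((D.weyl_mem_iff w).2 (D.pos_subset hα.1))).resolve_left h,
        hpn _ (hp w α hα.2)⟩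
  have hinv : ∀ w : weylGroup D, ∀ α ∈ D.Rpos.filter p, σ w⁻¹ (σ w α) = α := by
    intro w α hα
    have hα' := (Finset.mem_filter.1 hα).1
    simp only [σ]
    split_ifs with h h' h'
    · rw [weyl_apply_inv]
    · rw [weyl_apply_inv] at h'
      exact absurd hα' h'
    · rw [map_neg, weyl_apply_inv] at h'
      exact absurd h' (neg_notMem_Rpos hα')
    · rw [map_neg, weyl_apply_inv, neg_neg]
  refine Finset.prod_nbij' (σ w) (σ w⁻¹) (hσ w) (hσ w⁻¹) (hinv w) (fun α hα => ?_) ?_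
  · simpa using hinv w⁻¹ α hα
  · intro α hα
    simp only [σ]
    split_ifs
    · rfl
    · rw [hg _ ((D.weyl_mem_iff w).2 (D.pos_subset (Finset.mem_filter.1 hα).1))]

@[to_additive]
lemma prod_Rpos_weyl {M : Type*} [CommMonoid M] (g : E → M) (hg : ∀ α ∈ D.R, g (-α) = g α)
    (w : weylGroup D) : ∏ α ∈ D.Rpos, g (w.1 α) = ∏ α ∈ D.Rpos, g α := by
  simpa using prod_Rpos_filter_weyl (fun _ => True) (by simp) (by simp) g hg w

lemma half_notMem_weyl (w : weylGroup D) {α : E} (h : (2:ℝ)⁻¹ • α ∉ D.R) :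
    (2:ℝ)⁻¹ • w.1 α ∉ D.R := by
  rwa [← map_smul, D.weyl_mem_iff]

lemma half_notMem_neg {α : E} (h : (2:ℝ)⁻¹ • α ∉ D.R) : (2:ℝ)⁻¹ • -α ∉ D.R := by
  rwa [smul_neg, D.neg_mem_iff]

lemma prod_Rpos0_weyl (g : E → ℝ) (hg : ∀ α ∈ D.R, g (-α) = g α)
    (w : weylGroup D) : ∏ α ∈ Rpos0 D, g (w.1 α) = ∏ α ∈ Rpos0 D, g α :=
  prod_Rpos_filter_weyl (fun α => (2:ℝ)⁻¹ • α ∉ D.R) (fun w _ => half_notMem_weyl w)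
    (fun _ => half_notMem_neg) g hg w

lemma mem_Rpos0 {α : E} : α ∈ Rpos0 D ↔ α ∈ D.Rpos ∧ (2:ℝ)⁻¹ • α ∉ D.R := by
  simp [Rpos0]

lemma Rpos0_subset {α : E} (h : α ∈ Rpos0 D) : α ∈ D.Rpos := (mem_Rpos0.1 h).1

lemma Rpos0_mem_R {α : E} (h : α ∈ Rpos0 D) : α ∈ D.R := D.pos_subset (Rpos0_subset h)

/-- The set of positive indivisible roots is stable under `w` up to sign. -/
lemma weyl_mem_Rpos0_or_neg (w : weylGroup D) {α : E} (h : α ∈ Rpos0 D) :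
    (w.1 α ∈ D.Rpos ∧ w.1 α ∈ Rpos0 D) ∨ (w.1 α ∉ D.Rpos ∧ -w.1 α ∈ Rpos0 D) := by
  have h2 := half_notMem_weyl w (mem_Rpos0.1 h).2
  by_cases hw : w.1 α ∈ D.Rpos
  · exact Or.inl ⟨hw, mem_Rpos0.2 ⟨hw, h2⟩⟩
  · exact Or.inr ⟨hw, mem_Rpos0.2
      ⟨(D.pos_or_neg _ ((D.weyl_mem_iff w).2 (Rpos0_mem_R h))).resolve_left hw,
        half_notMem_neg h2⟩⟩

/-- Every positive root is a positive indivisible root or twice such a root. -/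
lemma exists_indivisible {α : E} (hα : α ∈ D.Rpos) :
    ∃ β ∈ Rpos0 D, α = β ∨ α = (2:ℝ) • β := by
  by_cases h : (2:ℝ)⁻¹ • α ∈ D.R
  · refine ⟨(2:ℝ)⁻¹ • α, mem_Rpos0.2 ⟨?_, fun h4 => ?_⟩, Or.inr (by simp)⟩
    · obtain ⟨u, hu⟩ := D.posChamber_nonempty
      rw [mem_Rpos_iff_of_posChamber hu h, inner_smul_left]
      exact mul_pos (by simp) (hu α hα)
    · obtain ⟨n, hn⟩ := D.integral α (D.pos_subset hα) _ h4
      have h0 : ⟪α, α⟫ ≠ 0 := inner_self_ne_zero.2 (D.root_ne_zero α (D.pos_subset hα))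
      rw [inner_coroot_left, inner_smul_right, inner_smul_right] at hn
      field_simp at hn
      have : (1:ℤ) = 2 * n := by exact_mod_cast (by linarith : (1:ℝ) = 2 * n)
      omega
  · exact ⟨α, mem_Rpos0.2 ⟨hα, h⟩, Or.inl rfl⟩

/-- Distinct positive indivisible roots are not proportional. -/
lemma eq_of_Rpos0_smul {α β : E} (hα : α ∈ Rpos0 D) (hβ : β ∈ Rpos0 D) {c : ℝ} (hc : 0 < c)
    (h : β = c • α) : α = β := by
  have h0 : ⟪α, α⟫ ≠ 0 := inner_self_ne_zero.2 (D.root_ne_zero α (Rpos0_mem_R hα))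
  obtain ⟨n, hn⟩ := D.integral α (Rpos0_mem_R hα) β (Rpos0_mem_R hβ)
  obtain ⟨m, hm⟩ := D.integral β (Rpos0_mem_R hβ) α (Rpos0_mem_R hα)
  rw [inner_coroot_left, h] at hn hm
  simp only [inner_smul_left, inner_smul_right, conj_trivial] at hn hm
  field_simp at hn hm
  have hn0 : 0 < n := by exact_mod_cast (by linarith : (0:ℝ) < n)
  have hm' : c * (m:ℝ) = 2 := by linarith
  have hm0 : 0 < m := by
    have : (0:ℝ) < m := by
      by_contra hcon
      nlinarith [mul_nonneg hc.le (neg_nonneg.2 (not_lt.1 hcon))]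
    exact_mod_cast this
  have hnm : n * m = 4 := by
    have : (n:ℝ) * m = 4 := by rw [← hn]; linarith
    exact_mod_cast this
  have hn4 : n ≤ 4 := by nlinarith
  have hn' : (n:ℝ) = 2 * c := by linarith
  have hcases : n = 1 ∨ n = 2 ∨ n = 4 := by
    interval_cases n <;> omega
  rcases hcases with h1 | h1 | h1 <;> rw [h1] at hn' <;> push_cast at hn'
  · have : c = 2⁻¹ := by linarith
    rw [this] at h
    exact absurd (h ▸ Rpos0_mem_R hβ) (mem_Rpos0.1 hα).2
  · have : c = 1 := by linarith
    rw [h, this, one_smul]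
  · have : c = 2 := by linarith
    refine absurd ?_ (mem_Rpos0.1 hβ).2
    rw [h, this, smul_smul]
    simpa using Rpos0_mem_R hα

end Roots

section Comparison

lemma le_of_hasDerivAt_nonneg {f f' : ℝ → ℝ} {a b : ℝ} (hab : a ≤ b)
    (hf : ∀ t ∈ Set.Icc a b, HasDerivAt f (f' t) t) (hf' : ∀ t ∈ Set.Ioo a b, 0 ≤ f' t) :
    f a ≤ f b := by
  refine monotoneOn_of_deriv_nonneg (convex_Icc a b)
    (fun t ht => (hf t ht).continuousAt.continuousWithinAt) (fun t ht => ?_) (fun t ht => ?_)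
    (Set.left_mem_Icc.2 hab) (Set.right_mem_Icc.2 hab) hab
  · exact (hf t (interior_subset ht)).differentiableAt.differentiableWithinAt
  · rw [(hf t (interior_subset ht)).deriv]
    rw [interior_Icc] at ht
    exact hf' t ht

/-- Positivity is preserved by quasi-monotone differential inequalities. -/
lemma pos_of_hasDerivAt_ge {ι : Type*} [Finite ι] {d d' : ι → ℝ → ℝ} {T K : ℝ}
    (hd : ∀ i, ∀ t ∈ Set.Icc 0 T, HasDerivAt (d i) (d' i t) t)
    (h : ∀ t ∈ Set.Icc 0 T, (∀ j, 0 ≤ d j t) → ∀ i, -K * d i t ≤ d' i t)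
    (h0 : ∀ i, 0 < d i 0) : ∀ t ∈ Set.Icc 0 T, ∀ i, 0 < d i t := by
  by_contra! hcon
  obtain ⟨t₁, ht₁, i₁, hi₁⟩ := hcon
  have hclosed : IsClosed (⋃ i, Set.Icc 0 T ∩ d i ⁻¹' Set.Iic 0) :=
    isClosed_iUnion_of_finite fun i => ContinuousOn.preimage_isClosed_of_isClosed
      (fun t ht => (hd i t ht).continuousAt.continuousWithinAt) isClosed_Icc isClosed_Iic
  have hcompact : IsCompact (⋃ i, Set.Icc 0 T ∩ d i ⁻¹' Set.Iic 0) :=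
    isCompact_Icc.of_isClosed_subset hclosed (Set.iUnion_subset fun i => Set.inter_subset_left)
  obtain ⟨t₀, ht₀, hleast⟩ := hcompact.exists_isLeast ⟨t₁, Set.mem_iUnion.2 ⟨i₁, ht₁, hi₁⟩⟩
  obtain ⟨i, ht₀T, hi⟩ := Set.mem_iUnion.1 ht₀
  have hsub : Set.Icc 0 t₀ ⊆ Set.Icc 0 T := Set.Icc_subset_Icc_right ht₀T.2
  have hpos : ∀ t ∈ Set.Ioo 0 t₀, ∀ j, 0 ≤ d j t := by
    intro t ht j
    by_contra! hneg
    exact absurd (hleast (Set.mem_iUnion.2 ⟨j, hsub (Set.Ioo_subset_Icc_self ht), hneg.le⟩))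
      (not_le.2 ht.2)
  have key : Real.exp (K * 0) * d i 0 ≤ Real.exp (K * t₀) * d i t₀ := by
    refine le_of_hasDerivAt_nonneg (f := fun t => Real.exp (K * t) * d i t)
      (f' := fun t => Real.exp (K * t) * (K * d i t + d' i t)) ht₀T.1 (fun t ht => ?_)
      (fun t ht => ?_)
    · have h1 : HasDerivAt (fun t => Real.exp (K * t)) (Real.exp (K * t) * K) t := by
        simpa using ((hasDerivAt_id t).const_mul K).exp
      refine (h1.mul (hd i t (hsub ht))).congr_deriv ?_
      ring
    · have := h t (hsub (Set.Ioo_subset_Icc_self ht)) (hpos t ht) i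
      exact mul_nonneg (Real.exp_pos _).le (by linarith)
  have h1 := h0 i
  have h2 : Real.exp (K * t₀) * d i t₀ ≤ 0 :=
    mul_nonpos_of_nonneg_of_nonpos (Real.exp_pos _).le hi
  simp only [mul_zero, Real.exp_zero, one_mul] at key
  linarith

end Comparison

section System

/-- The Bose function `1 / (e^s - 1)`. -/
def bose (s : ℝ) : ℝ := (Real.exp s - 1)⁻¹

lemma bose_pos {s : ℝ} (hs : 0 < s) : 0 < bose s :=
  inv_pos.2 (sub_pos.2 (Real.one_lt_exp_iff.2 hs))

lemma bose_anti {s t : ℝ} (hs : 0 < s) (hst : s ≤ t) : bose t ≤ bose s := by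
  have := Real.one_lt_exp_iff.2 hs
  unfold bose
  gcongr

/-- The function `e^{(ρ,x)} G(w x)`. -/
def weighted (D : HOData E) (G : E → ℝ) (w : weylGroup D) (x : E) : ℝ :=
  Real.exp ⟪rhoHO D, x⟫ * G (w.1 x)

/-- The right-hand side of the differential system satisfied by the functions `weighted D G w`
on the positive chamber, in the direction `ξ`. -/
def drift (D : HOData E) (f : weylGroup D → ℝ) (w : weylGroup D) (x ξ : E) : ℝ :=
  ∑ α ∈ D.Rpos, D.k α * (|⟪α, w.1 ξ⟫| * bose |⟪α, w.1 x⟫| * (f (D.weylRefl α * w) - f w)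
    + max ⟪α, w.1 ξ⟫ 0 * f (D.weylRefl α * w))

variable {D : HOData E}

lemma k_pos' {α : E} (hα : α ∈ D.Rpos) : 0 < D.k α := D.k_pos α (D.pos_subset hα)

lemma sum_k_weyl (φ : ℝ → ℝ → ℝ) (w : weylGroup D) {x ξ : E} (hx : x ∈ posChamber D)
    (hξ : ξ ∈ posChamber D) :
    ∑ α ∈ D.Rpos, D.k α * φ |⟪α, w.1 x⟫| |⟪α, w.1 ξ⟫| =
      ∑ α ∈ D.Rpos, D.k α * φ ⟪α, x⟫ ⟪α, ξ⟫ := by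
  have h := sum_Rpos_weyl (D := D) (fun α => D.k α * φ |⟪α, x⟫| |⟪α, ξ⟫|)
    (fun α hα => by simp only [D.k_neg hα, inner_neg_left, abs_neg]) w⁻¹
  refine Eq.trans (Finset.sum_congr rfl fun α hα => ?_) (h.trans
    (Finset.sum_congr rfl fun α hα => ?_))
  · rw [inner_weyl, inner_weyl, D.k_weyl _ (D.pos_subset hα)]
  · rw [abs_of_pos (hx α hα), abs_of_pos (hξ α hα)]

lemma two_mul_inner_rho (ξ : E) : 2 * ⟪rhoHO D, ξ⟫ = ∑ α ∈ D.Rpos, D.k α * ⟪α, ξ⟫ := by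
  simp [rhoHO, inner_smul_left, sum_inner]

lemma sum_k_abs_inner (w : weylGroup D) {ξ : E} (hξ : ξ ∈ posChamber D) :
    ∑ α ∈ D.Rpos, D.k α * |⟪α, w.1 ξ⟫| = 2 * ⟪rhoHO D, ξ⟫ := by
  rw [two_mul_inner_rho, sum_k_weyl (fun _ b => b) w hξ hξ]

lemma drift_term {a b p q : ℝ} (h : (0 < a ∧ 0 < b) ∨ (a < 0 ∧ b < 0)) :
    b / (1 - Real.exp (-a)) * (p - q) + (b + |b|) / 2 * q =
      |b| * bose |a| * (p - q) + max b 0 * p := by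
  rcases h with ⟨ha, hb⟩ | ⟨ha, hb⟩
  · have h1 : Real.exp a - 1 ≠ 0 := (sub_pos.2 (Real.one_lt_exp_iff.2 ha)).ne'
    have h2 : 1 - Real.exp (-a) = (Real.exp a - 1) / Real.exp a := by
      rw [Real.exp_neg]
      field_simp
    rw [h2, abs_of_pos hb, abs_of_pos ha, max_eq_left hb.le, bose]
    field_simp
    ring
  · have h1 : Real.exp (-a) - 1 ≠ 0 := (sub_pos.2 (Real.one_lt_exp_iff.2 (neg_pos.2 ha))).ne'
    have h2 : 1 - Real.exp (-a) = -(Real.exp (-a) - 1) := by ring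
    rw [h2, abs_of_neg hb, abs_of_neg ha, max_eq_right hb.le, bose]
    field_simp
    ring

lemma sign_pair (w : weylGroup D) {α x ξ : E} (hα : α ∈ D.R) (hx : x ∈ posChamber D)
    (hξ : ξ ∈ posChamber D) :
    (0 < ⟪α, w.1 x⟫ ∧ 0 < ⟪α, w.1 ξ⟫) ∨ (⟪α, w.1 x⟫ < 0 ∧ ⟪α, w.1 ξ⟫ < 0) :=
  (inner_weyl_sign w hα).imp (fun h => ⟨h x hx, h ξ hξ⟩) (fun h => ⟨h x hx, h ξ hξ⟩)

variable {G : E → ℝ}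

lemma hasDerivAt_weighted (hG : IsOpdamR D 0 G) (w : weylGroup D) {x₀ ξ : E}
    (hx₀ : x₀ ∈ posChamber D) (hξ : ξ ∈ posChamber D) {t : ℝ} (ht : 0 ≤ t) :
    HasDerivAt (fun t => weighted D G w (x₀ + t • ξ))
      (drift D (fun v => weighted D G v (x₀ + t • ξ)) w (x₀ + t • ξ) ξ) t := by
  have hx := posChamber_add_smul hx₀ hξ ht
  obtain ⟨hGa, -, hGd⟩ := hG
  have hline : HasDerivAt (fun t : ℝ => x₀ + t • ξ) ξ t := by
    simpa using ((hasDerivAt_id t).smul_const ξ).const_add x₀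
  have hw : HasDerivAt (fun t : ℝ => w.1 (x₀ + t • ξ)) (w.1 ξ) t :=
    w.1.toContinuousLinearEquiv.toContinuousLinearMap.hasFDerivAt.comp_hasDerivAt t hline
  have hGt := ((hGa (w.1 (x₀ + t • ξ)) trivial).differentiableAt.hasFDerivAt).comp_hasDerivAt
    t hw
  have hρ : HasDerivAt (fun t : ℝ => ⟪rhoHO D, x₀ + t • ξ⟫) ⟪rhoHO D, ξ⟫ t :=
    ((innerSL ℝ (rhoHO D)).hasFDerivAt).comp_hasDerivAt t hline
  refine (hρ.exp.mul hGt).congr_deriv ?_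
  rw [hGd _ _ (regular_weyl hx w), Function.comp_apply]
  generalize x₀ + t • ξ = x at hx
  have h1 : ⟪rhoHO D, ξ⟫ = ∑ α ∈ D.Rpos, D.k α * |⟪α, w.1 ξ⟫| / 2 := by
    rw [← Finset.sum_div, sum_k_abs_inner w hξ]
    ring
  have h2 : ⟪rhoHO D + 0, w.1 ξ⟫ = ∑ α ∈ D.Rpos, D.k α * ⟪α, w.1 ξ⟫ / 2 := by
    rw [← Finset.sum_div, ← two_mul_inner_rho, add_zero]
    ring
  have h3 : drift D (fun v => weighted D G v x) w x ξ = ∑ α ∈ D.Rpos, D.k α *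
      (⟪α, w.1 ξ⟫ / (1 - Real.exp (-⟪α, w.1 x⟫)) *
        (weighted D G (D.weylRefl α * w) x - weighted D G w x) +
      (⟪α, w.1 ξ⟫ + |⟪α, w.1 ξ⟫|) / 2 * weighted D G w x) :=
    Finset.sum_congr rfl fun α hα => by
      rw [drift_term (sign_pair w (D.pos_subset hα) hx hξ)]
  rw [h1, h2, h3]
  simp only [Finset.sum_mul, Finset.mul_sum, mul_add, ← Finset.sum_add_distrib]
  refine Finset.sum_congr rfl fun α hα => ?_
  simp only [weighted, weylRefl_mul_apply (D.pos_subset hα)]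
  ring

lemma abs_inner_weyl_pos (w : weylGroup D) {α x : E} (hα : α ∈ D.R) (hx : x ∈ posChamber D) :
    0 < |⟪α, w.1 x⟫| :=
  abs_pos.2 (regular_weyl hx w α hα)

/-- Discarding the off-diagonal terms of the drift except for one. -/
lemma drift_ge_of_nonneg {f : weylGroup D → ℝ} (hf : ∀ v, 0 ≤ f v) (w : weylGroup D) {x ξ : E}
    (hx : x ∈ posChamber D) (hξ : ξ ∈ posChamber D) {β : E} (hβ : β ∈ D.Rpos) :
    D.k β * max ⟪β, w.1 ξ⟫ 0 * f (D.weylRefl β * w)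
      - (∑ α ∈ D.Rpos, D.k α * (⟪α, ξ⟫ * bose ⟪α, x⟫)) * f w ≤ drift D f w x ξ := by
  rw [← sum_k_weyl (fun a b => b * bose a) w hx hξ, drift, Finset.sum_mul, sub_le_iff_le_add,
    ← Finset.sum_add_distrib]
  have hterm : ∀ α ∈ D.Rpos, D.k α * max ⟪α, w.1 ξ⟫ 0 * f (D.weylRefl α * w) ≤
      D.k α * (|⟪α, w.1 ξ⟫| * bose |⟪α, w.1 x⟫| * (f (D.weylRefl α * w) - f w)
        + max ⟪α, w.1 ξ⟫ 0 * f (D.weylRefl α * w))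
      + D.k α * (|⟪α, w.1 ξ⟫| * bose |⟪α, w.1 x⟫|) * f w := by
    intro α hα
    have h1 := bose_pos (abs_inner_weyl_pos w (D.pos_subset hα) hx)
    have h2 := (k_pos' hα).le
    have h3 : 0 ≤ D.k α * (|⟪α, w.1 ξ⟫| * bose |⟪α, w.1 x⟫|) * f (D.weylRefl α * w) :=
      mul_nonneg (by positivity) (hf _)
    linarith
  refine (hterm β hβ).trans (Finset.single_le_sum (f := fun α => D.k α *
    (|⟪α, w.1 ξ⟫| * bose |⟪α, w.1 x⟫| * (f (D.weylRefl α * w) - f w)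
        + max ⟪α, w.1 ξ⟫ 0 * f (D.weylRefl α * w))
      + D.k α * (|⟪α, w.1 ξ⟫| * bose |⟪α, w.1 x⟫|) * f w) (fun α hα => ?_) hβ)
  refine le_trans ?_ (hterm α hα)
  exact mul_nonneg (mul_nonneg (k_pos' hα).le (le_max_right _ _)) (hf _)

lemma neg_mul_le_drift {f : weylGroup D → ℝ} (hf : ∀ v, 0 ≤ f v) (w : weylGroup D) {x ξ : E}
    (hx : x ∈ posChamber D) (hξ : ξ ∈ posChamber D) :
    -(∑ α ∈ D.Rpos, D.k α * (⟪α, ξ⟫ * bose ⟪α, x⟫)) * f w ≤ drift D f w x ξ := by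
  rcases D.Rpos.eq_empty_or_nonempty with h | ⟨β, hβ⟩
  · simp [h, drift]
  · refine le_trans ?_ (drift_ge_of_nonneg hf w hx hξ hβ)
    have : 0 ≤ D.k β * max ⟪β, w.1 ξ⟫ 0 * f (D.weylRefl β * w) :=
      mul_nonneg (mul_nonneg (k_pos' hβ).le (le_max_right _ _)) (hf _)
    linarith

lemma sum_bose_path_le {x₀ ξ : E} (hx₀ : x₀ ∈ posChamber D) (hξ : ξ ∈ posChamber D) {t : ℝ}
    (ht : 0 ≤ t) :
    ∑ α ∈ D.Rpos, D.k α * (⟪α, ξ⟫ * bose ⟪α, x₀ + t • ξ⟫) ≤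
      ∑ α ∈ D.Rpos, D.k α * (⟪α, ξ⟫ * bose ⟪α, x₀⟫) := by
  refine Finset.sum_le_sum fun α hα => ?_
  have h1 := hξ α hα
  have h2 := (k_pos' hα).le
  have h3 : bose ⟪α, x₀ + t • ξ⟫ ≤ bose ⟪α, x₀⟫ := by
    refine bose_anti (hx₀ α hα) ?_
    rw [inner_add_right, inner_smul_right]
    have := mul_nonneg ht h1.le
    linarith
  gcongr

/-- Positivity along rays for families satisfying the drift inequality. -/
lemma pos_of_drift_le [Finite (weylGroup D)] {x₀ ξ : E} (hx₀ : x₀ ∈ posChamber D)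
    (hξ : ξ ∈ posChamber D) {T : ℝ} {d d' : weylGroup D → ℝ → ℝ}
    (hd : ∀ w, ∀ t ∈ Set.Icc 0 T, HasDerivAt (d w) (d' w t) t)
    (hd' : ∀ w, ∀ t ∈ Set.Icc 0 T, drift D (fun v => d v t) w (x₀ + t • ξ) ξ ≤ d' w t)
    (h0 : ∀ w, 0 < d w 0) : ∀ t ∈ Set.Icc 0 T, ∀ w, 0 < d w t := by
  refine pos_of_hasDerivAt_ge (K := ∑ α ∈ D.Rpos, D.k α * (⟪α, ξ⟫ * bose ⟪α, x₀⟫)) hd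
    (fun t ht hpos w => ?_) h0
  refine le_trans ?_ ((neg_mul_le_drift hpos w (posChamber_add_smul hx₀ hξ ht.1) hξ).trans
    (hd' w t ht))
  exact mul_le_mul_of_nonneg_right (neg_le_neg (sum_bose_path_le hx₀ hξ ht.1)) (hpos w)

lemma weighted_pos [Finite (weylGroup D)] (hG : IsOpdamR D 0 G) {x : E}
    (hx : x ∈ posChamber D) (w : weylGroup D) : 0 < weighted D G w x := by
  have hev : ∀ᶠ ε in nhdsWithin (0:ℝ) (Set.Ioi 0), ∀ v : weylGroup D, 0 < G (v.1 (ε • x)) := by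
    rw [Filter.eventually_all]
    intro v
    refine Filter.Eventually.filter_mono nhdsWithin_le_nhds ?_
    have hcont : Continuous fun ε : ℝ => G (v.1 (ε • x)) :=
      hG.1.continuousOn.comp_continuous
        (v.1.continuous.comp (continuous_id.smul continuous_const)) (fun _ => trivial)
    refine hcont.continuousAt.eventually (lt_mem_nhds ?_)
    simp [hG.2.1]
  obtain ⟨ε, hε, hε1⟩ := (hev.and (Ioo_mem_nhdsGT (one_pos (α := ℝ)))).exists
  have hx₀ : ε • x ∈ posChamber D := fun α hα => by
    rw [inner_smul_right]
    exact mul_pos hε1.1 (hx α hα)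
  have h := pos_of_drift_le (T := 1 - ε) hx₀ hx
    (fun w t ht => hasDerivAt_weighted hG w hx₀ hx ht.1) (fun _ _ _ => le_rfl)
    (fun v => by simpa [weighted] using mul_pos (Real.exp_pos _) (hε v)) (1 - ε)
    ⟨by linarith [hε1.2], le_rfl⟩ w
  simpa [← add_smul] using h

lemma sum_drift_eq [Fintype (weylGroup D)] (f : weylGroup D → ℝ) (x ξ : E) :
    ∑ w, drift D f w x ξ = ∑ w, (∑ α ∈ D.Rpos, D.k α * max (-⟪α, w.1 ξ⟫) 0) * f w := by
  simp only [drift, Finset.sum_mul]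
  rw [Finset.sum_comm, Finset.sum_comm (s := Finset.univ)]
  refine Finset.sum_congr rfl fun α hα => ?_
  have hαR := D.pos_subset hα
  have hneg : ∀ (w : weylGroup D) (y : E), ⟪α, (D.weylRefl α * w).1 y⟫ = -⟪α, w.1 y⟫ := by
    intro w y
    rw [weylRefl_mul_apply hαR, ← inner_rRefl_left, rRefl_self (D.root_ne_zero α hαR),
      inner_neg_left]
  have hflip : ∀ F : weylGroup D → ℝ, ∑ w, F (D.weylRefl α * w) = ∑ w, F w := fun F =>
    Equiv.sum_comp (Equiv.mulLeft (D.weylRefl α)) F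
  have h1 : ∑ w : weylGroup D, D.k α * (|⟪α, w.1 ξ⟫| * bose |⟪α, w.1 x⟫|) *
      f (D.weylRefl α * w) =
      ∑ w : weylGroup D, D.k α * (|⟪α, w.1 ξ⟫| * bose |⟪α, w.1 x⟫|) * f w := by
    rw [← hflip]
    simp only [hneg, abs_neg, weylRefl_mul_weylRefl_mul hαR]
  have h2 : ∑ w : weylGroup D, D.k α * max ⟪α, w.1 ξ⟫ 0 * f (D.weylRefl α * w) =
      ∑ w : weylGroup D, D.k α * max (-⟪α, w.1 ξ⟫) 0 * f w := by
    rw [← hflip]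
    simp only [hneg, weylRefl_mul_weylRefl_mul hαR]
  rw [← h2, ← sub_eq_zero, ← sub_eq_zero.2 h1, ← Finset.sum_sub_distrib,
    ← Finset.sum_sub_distrib]
  refine Finset.sum_congr rfl fun w _ => ?_
  ring

/-- Two-sided monotonicity of the Weyl-symmetrized function in dominant directions. -/
lemma sum_weighted_harnack [Fintype (weylGroup D)] (hG : IsOpdamR D 0 G) {x ξ : E}
    (hx : x ∈ posChamber D) (hξ : ξ ∈ posChamber D) :
    ∑ w, weighted D G w x ≤ ∑ w, weighted D G w (x + ξ) ∧
      ∑ w, weighted D G w (x + ξ) ≤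
        Real.exp (2 * ⟪rhoHO D, ξ⟫) * ∑ w, weighted D G w x := by
  have hder : ∀ t ∈ Set.Icc (0:ℝ) 1, HasDerivAt (fun t => ∑ w, weighted D G w (x + t • ξ))
      (∑ w, drift D (fun v => weighted D G v (x + t • ξ)) w (x + t • ξ) ξ) t := fun t ht =>
    HasDerivAt.fun_sum fun w _ => hasDerivAt_weighted hG w hx hξ ht.1
  simp only [sum_drift_eq] at hder
  have hpos : ∀ t ∈ Set.Ioo (0:ℝ) 1, ∀ w, 0 < weighted D G w (x + t • ξ) := fun t ht w =>
    weighted_pos hG (posChamber_add_smul hx hξ ht.1.le) w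
  constructor
  · have h := le_of_hasDerivAt_nonneg zero_le_one hder (fun t ht => Finset.sum_nonneg fun w _ =>
      mul_nonneg (Finset.sum_nonneg fun α hα => mul_nonneg (k_pos' hα).le (le_max_right _ _))
        (hpos t ht w).le)
    simpa using h
  · set r := 2 * ⟪rhoHO D, ξ⟫ with hr
    have h := le_of_hasDerivAt_nonneg (zero_le_one (α := ℝ))
      (f := fun t => -(Real.exp (-r * t) * ∑ w, weighted D G w (x + t • ξ)))
      (f' := fun t => Real.exp (-r * t) * (r * ∑ w, weighted D G w (x + t • ξ) -
        ∑ w, (∑ α ∈ D.Rpos, D.k α * max (-⟪α, w.1 ξ⟫) 0) * weighted D G w (x + t • ξ)))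
      (fun t ht => ?_) (fun t ht => ?_)
    · simp only [mul_zero, Real.exp_zero, one_mul, zero_smul, add_zero, mul_one, one_smul,
        neg_le_neg_iff] at h
      have h' := mul_le_mul_of_nonneg_left h (Real.exp_pos r).le
      rwa [← mul_assoc, ← Real.exp_add, add_neg_cancel, Real.exp_zero, one_mul] at h'
    · have h1 : HasDerivAt (fun t => Real.exp (-r * t)) (Real.exp (-r * t) * -r) t := by
        simpa using ((hasDerivAt_id t).const_mul (-r)).exp
      refine (h1.mul (hder t ht)).neg.congr_deriv ?_
      ring
    · refine mul_nonneg (Real.exp_pos _).le (sub_nonneg.2 ?_)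
      rw [Finset.mul_sum]
      refine Finset.sum_le_sum fun w _ => mul_le_mul_of_nonneg_right ?_ (hpos t ht w).le
      rw [hr, ← sum_k_abs_inner w hξ]
      refine Finset.sum_le_sum fun α hα => mul_le_mul_of_nonneg_left ?_ (k_pos' hα).le
      exact max_le (neg_le_abs _) (abs_nonneg _)

end System

section LowerBound

variable {D : HOData E} {G : E → ℝ}

lemma bose_le {s : ℝ} (hs : 1 ≤ s) : bose s ≤ 2 * Real.exp (-s) := by
  have h1 := Real.add_one_le_exp s
  have h2 : 0 < Real.exp s - 1 := by linarith
  rw [bose, Real.exp_neg, inv_le_iff_one_le_mul₀ h2]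
  have h3 := Real.exp_pos s
  field_simp
  linarith

/-- A bounded Weyl-invariant potential whose gradient dominates the exponentially decaying
coefficients of the drift. -/
def potential (D : HOData E) (x : E) : ℝ :=
  ∑ α ∈ D.Rpos, D.k α * (2 * Real.exp (-⟪α, x⟫ / 2))

lemma potential_nonneg (x : E) : 0 ≤ potential D x :=
  Finset.sum_nonneg fun α hα => mul_nonneg (k_pos' hα).le (by positivity)

lemma hasDerivAt_inner_path (α x₀ ξ : E) (t : ℝ) :
    HasDerivAt (fun t : ℝ => ⟪α, x₀ + t • ξ⟫) ⟪α, ξ⟫ t := by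
  have hline : HasDerivAt (fun t : ℝ => x₀ + t • ξ) ξ t := by
    simpa using ((hasDerivAt_id t).smul_const ξ).const_add x₀
  exact ((innerSL ℝ α).hasFDerivAt).comp_hasDerivAt t hline

lemma hasDerivAt_potential (x₀ ξ : E) (t : ℝ) :
    HasDerivAt (fun t => potential D (x₀ + t • ξ))
      (-∑ α ∈ D.Rpos, D.k α * (⟪α, ξ⟫ * Real.exp (-⟪α, x₀ + t • ξ⟫ / 2))) t := by
  rw [← Finset.sum_neg_distrib]
  refine HasDerivAt.fun_sum fun α _ => ?_
  refine (((((hasDerivAt_inner_path α x₀ ξ t).fun_neg.div_const 2).exp).const_mul 2).const_mul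
    (D.k α)).congr_deriv ?_
  ring

/-- The functions `weighted D G w` damped so that all diagonal terms of the system are
absorbed. -/
def damped (D : HOData E) (G : E → ℝ) (w : weylGroup D) (x : E) : ℝ :=
  Real.exp (-2 * potential D x) * weighted D G w x

/-- The derivative of `damped` in the direction `ξ`. -/
def dampedDeriv (D : HOData E) (G : E → ℝ) (w : weylGroup D) (x ξ : E) : ℝ :=
  Real.exp (-2 * potential D x) *
    (2 * (∑ α ∈ D.Rpos, D.k α * (⟪α, ξ⟫ * Real.exp (-⟪α, x⟫ / 2))) * weighted D G w x +
      drift D (fun v => weighted D G v x) w x ξ)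

lemma hasDerivAt_damped (hG : IsOpdamR D 0 G) (w : weylGroup D) {x₀ ξ : E}
    (hx₀ : x₀ ∈ posChamber D) (hξ : ξ ∈ posChamber D) {t : ℝ} (ht : 0 ≤ t) :
    HasDerivAt (fun t => damped D G w (x₀ + t • ξ)) (dampedDeriv D G w (x₀ + t • ξ) ξ) t := by
  refine ((((hasDerivAt_potential x₀ ξ t).const_mul (-2)).exp).mul
    (hasDerivAt_weighted hG w hx₀ hξ ht)).congr_deriv ?_
  rw [dampedDeriv]
  ring

lemma two_mul_sum_ge_bose {x ξ : E} (hx : ∀ α ∈ D.Rpos, 1 ≤ ⟪α, x⟫) (hξ : ξ ∈ posChamber D) :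
    ∑ α ∈ D.Rpos, D.k α * (⟪α, ξ⟫ * bose ⟪α, x⟫) ≤
      2 * ∑ α ∈ D.Rpos, D.k α * (⟪α, ξ⟫ * Real.exp (-⟪α, x⟫ / 2)) := by
  rw [Finset.mul_sum]
  refine Finset.sum_le_sum fun α hα => ?_
  have h1 := hξ α hα
  have h2 := (k_pos' hα).le
  have h3 : bose ⟪α, x⟫ ≤ 2 * Real.exp (-⟪α, x⟫ / 2) := by
    refine (bose_le (hx α hα)).trans ?_
    gcongr
    linarith [hx α hα]
  calc D.k α * (⟪α, ξ⟫ * bose ⟪α, x⟫)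
      ≤ D.k α * (⟪α, ξ⟫ * (2 * Real.exp (-⟪α, x⟫ / 2))) := by gcongr
    _ = _ := by ring

lemma dampedDeriv_ge [Finite (weylGroup D)] (hG : IsOpdamR D 0 G) (w : weylGroup D) {x ξ : E}
    (hx : ∀ α ∈ D.Rpos, 1 ≤ ⟪α, x⟫) (hξ : ξ ∈ posChamber D) {β : E} (hβ : β ∈ D.Rpos) :
    D.k β * max ⟪β, w.1 ξ⟫ 0 * damped D G (D.weylRefl β * w) x ≤ dampedDeriv D G w x ξ := by
  have hx' : x ∈ posChamber D := fun α hα => one_pos.trans_le (hx α hα)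
  have h1 := drift_ge_of_nonneg (fun v => (weighted_pos hG hx' v).le) w hx' hξ hβ
  have h2 := mul_le_mul_of_nonneg_right (two_mul_sum_ge_bose hx hξ) (weighted_pos hG hx' w).le
  rw [damped, dampedDeriv, mul_left_comm]
  exact mul_le_mul_of_nonneg_left (by linarith) (Real.exp_pos _).le

lemma dampedDeriv_nonneg [Finite (weylGroup D)] (hG : IsOpdamR D 0 G) (w : weylGroup D)
    {x ξ : E} (hx : ∀ α ∈ D.Rpos, 1 ≤ ⟪α, x⟫) (hξ : ξ ∈ posChamber D) :
    0 ≤ dampedDeriv D G w x ξ := by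
  have hx' : x ∈ posChamber D := fun α hα => one_pos.trans_le (hx α hα)
  have h1 := neg_mul_le_drift (fun v => (weighted_pos hG hx' v).le) w hx' hξ
  have h2 := mul_le_mul_of_nonneg_right (two_mul_sum_ge_bose hx hξ) (weighted_pos hG hx' w).le
  exact mul_nonneg (Real.exp_pos _).le (by linarith)

/-- A vector separating the positive indivisible roots normalized by their value at `u`. -/
lemma exists_separating {u : E} (hu : u ∈ posChamber D) :
    ∃ v : E, ∀ γ ∈ Rpos0 D, ∀ δ ∈ Rpos0 D, γ ≠ δ → ⟪γ, v⟫ / ⟪γ, u⟫ ≠ ⟪δ, v⟫ / ⟪δ, u⟫ := by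
  let ι := {p : Rpos0 D × Rpos0 D // p.1 ≠ p.2}
  let z : ι → E := fun p => ⟪p.1.2.1, u⟫ • p.1.1.1 - ⟪p.1.1.1, u⟫ • p.1.2.1
  have hz : ∀ p, z p ≠ 0 := by
    rintro ⟨⟨⟨γ, hγ⟩, ⟨δ, hδ⟩⟩, hne⟩ h0
    have hγu := hu γ (Rpos0_subset hγ)
    have hδu := hu δ (Rpos0_subset hδ)
    refine hne (Subtype.ext (eq_of_Rpos0_smul hγ hδ (div_pos hδu hγu) ?_))
    have h1 : ⟪δ, u⟫ • γ = ⟪γ, u⟫ • δ := sub_eq_zero.1 h0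
    rw [div_eq_inv_mul, ← smul_smul, h1, smul_smul, inv_mul_cancel₀ hγu.ne', one_smul]
  obtain ⟨v, -, hv⟩ := Module.Dual.exists_forall_mem_ne_zero_of_forall_exists
    (⊤ : Submodule ℝ E) (fun p : ι => (innerSL ℝ (z p)).toLinearMap) (fun p =>
      ⟨z p, trivial, by simpa using hz p⟩)
  refine ⟨v, fun γ hγ δ hδ hne h => hv ⟨(⟨γ, hγ⟩, ⟨δ, hδ⟩), fun h => hne (congrArg (·.1) h)⟩ ?_⟩
  rw [div_eq_div_iff (hu γ (Rpos0_subset hγ)).ne' (hu δ (Rpos0_subset hδ)).ne'] at h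
  simp only [z, ContinuousLinearMap.coe_coe, innerSL_apply_apply, inner_sub_left,
    inner_smul_left, conj_trivial]
  linarith

/-- If the roots in `A` are exactly the positive indivisible roots kept positive by `w`, and `A`
is an upper set for the ordering given by `v`, then reflecting in the smallest element of `A`
removes exactly this element. -/
lemma positive_set_step {u v : E} (hu : u ∈ posChamber D) {A : Finset E} {w : weylGroup D}
    (hw : ∀ δ ∈ Rpos0 D, (w.1 δ ∈ D.Rpos ↔ δ ∈ A)) {γ : E} (hγ : γ ∈ Rpos0 D) (hγA : γ ∈ A)
    (hbelow : ∀ δ ∈ Rpos0 D, δ ∉ A → ⟪δ, v⟫ / ⟪δ, u⟫ < ⟪γ, v⟫ / ⟪γ, u⟫)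
    (habove : ∀ δ ∈ Rpos0 D, δ ∈ A → δ ≠ γ → ⟪γ, v⟫ / ⟪γ, u⟫ < ⟪δ, v⟫ / ⟪δ, u⟫) :
    ∀ δ ∈ Rpos0 D,
      ((D.weylRefl (w.1 γ) * w).1 δ ∈ D.Rpos ↔ δ ∈ A.erase γ) := by
  have hγR := Rpos0_mem_R hγ
  have hγ0 := D.root_ne_zero γ hγR
  set τ := ⟪γ, v⟫ / ⟪γ, u⟫ with hτ
  set p := v - τ • u with hp
  have hpin : ∀ δ ∈ Rpos0 D, ⟪δ, p⟫ = (⟪δ, v⟫ / ⟪δ, u⟫ - τ) * ⟪δ, u⟫ := by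
    intro δ hδ
    have := hu δ (Rpos0_subset hδ)
    rw [hp, inner_sub_right, inner_smul_right]
    field_simp
  have hγp : ⟪γ, p⟫ = 0 := by rw [hpin γ hγ, hτ, sub_self, zero_mul]
  have hA : ∀ δ ∈ Rpos0 D, δ ≠ γ → (δ ∈ A ∧ 0 < ⟪δ, p⟫) ∨ (δ ∉ A ∧ ⟪δ, p⟫ < 0) := by
    intro δ hδ hne
    have h := hu δ (Rpos0_subset hδ)
    rw [hpin δ hδ]
    by_cases hδA : δ ∈ A
    · exact Or.inl ⟨hδA, mul_pos (sub_pos.2 (habove δ hδ hδA hne)) h⟩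
    · exact Or.inr ⟨hδA, mul_neg_of_neg_of_pos (sub_neg.2 (hbelow δ hδ hδA)) h⟩
  intro δ hδ
  have happ : (D.weylRefl (w.1 γ) * w).1 δ = w.1 (rRefl γ δ) := by
    rw [weylRefl_mul_apply ((D.weyl_mem_iff w).2 hγR), map_rRefl]
  rw [happ, Finset.mem_erase]
  rcases eq_or_ne δ γ with rfl | hne
  · rw [rRefl_self hγ0, map_neg]
    simpa using neg_notMem_Rpos ((hw δ hδ).2 hγA)
  · have hpδ : ⟪rRefl γ δ, p⟫ = ⟪δ, p⟫ := by
      rw [inner_rRefl_left, inner_rRefl_right, hγp]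
      ring
    simp only [ne_eq, hne, not_false_eq_true, true_and]
    have hsign := hA δ hδ hne
    rcases weyl_mem_Rpos0_or_neg (D.weylRefl γ) hδ with ⟨-, h⟩ | ⟨-, h⟩ <;>
      rw [weylRefl_apply hγR] at h
    · have hne' : rRefl γ δ ≠ γ := by
        intro h'
        have h2 : δ = -γ := by rw [← rRefl_rRefl hγ0 δ, h', rRefl_self hγ0]
        exact neg_notMem_Rpos (Rpos0_subset hγ) (h2 ▸ Rpos0_subset hδ)
      have h1 := hA _ h hne'
      rw [hpδ] at h1
      rw [hw _ h]
      rcases hsign with ⟨ha, hb⟩ | ⟨ha, hb⟩ <;> rcases h1 with ⟨hc, hd⟩ | ⟨hc, hd⟩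
      · simp [ha, hc]
      · linarith
      · linarith
      · simp [ha, hc]
    · have hne' : -rRefl γ δ ≠ γ := by
        intro h'
        refine hne ?_
        rw [← rRefl_rRefl hγ0 δ, neg_eq_iff_eq_neg.1 h', rRefl_neg, rRefl_self hγ0, neg_neg]
      have h1 := hA _ h hne'
      rw [inner_neg_left, hpδ] at h1
      have h2 := hw _ h
      rw [map_neg] at h2
      have hR : w.1 (rRefl γ δ) ∈ D.R :=
        (D.weyl_mem_iff w).2 (D.refl_mem γ hγR δ (Rpos0_mem_R hδ))
      rcases hsign with ⟨ha, hb⟩ | ⟨ha, hb⟩ <;> rcases h1 with ⟨hc, hd⟩ | ⟨hc, hd⟩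
      · linarith
      · simp only [hc, iff_false] at h2
        simpa [ha] using (D.pos_or_neg _ hR).resolve_right h2
      · simp only [hc, iff_true] at h2
        simpa [ha] using neg_notMem_Rpos h2
      · linarith

lemma damped_ge_prod [Finite (weylGroup D)] (hG : IsOpdamR D 0 G) {u v ξ : E} {c : ℝ}
    (hc : 0 ≤ c) (hu : ∀ α ∈ D.Rpos, 1 ≤ ⟪α, u⟫) (hξ : ξ ∈ posChamber D)
    (hv : ∀ γ ∈ Rpos0 D, ∀ δ ∈ Rpos0 D, γ ≠ δ → ⟪γ, v⟫ / ⟪γ, u⟫ ≠ ⟪δ, v⟫ / ⟪δ, u⟫)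
    (hcw : ∀ w, c ≤ damped D G w u) (n : ℕ) :
    ∀ (A : Finset E) (w : weylGroup D), A.card = n → A ⊆ Rpos0 D →
      (∀ δ ∈ Rpos0 D, (w.1 δ ∈ D.Rpos ↔ δ ∈ A)) →
      (∀ γ ∈ A, ∀ δ ∈ Rpos0 D, δ ∉ A → ⟪δ, v⟫ / ⟪δ, u⟫ < ⟪γ, v⟫ / ⟪γ, u⟫) →
      ∀ t, 0 ≤ t → c * (∏ γ ∈ A, D.k γ * ⟪γ, ξ⟫) * (t ^ n / n.factorial) ≤
        damped D G w (u + t • ξ) := by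
  have hu' : u ∈ posChamber D := fun α hα => one_pos.trans_le (hu α hα)
  have hpath : ∀ t : ℝ, 0 ≤ t → ∀ α ∈ D.Rpos, 1 ≤ ⟪α, u + t • ξ⟫ := by
    intro t ht α hα
    rw [inner_add_right, inner_smul_right]
    have := mul_nonneg ht (hξ α hα).le
    linarith [hu α hα]
  induction n with
  | zero =>
    intro A w hA _ _ _ t ht
    rw [Finset.card_eq_zero.1 hA]
    have h := le_of_hasDerivAt_nonneg ht
      (fun s hs => hasDerivAt_damped hG w hu' hξ hs.1)
      (fun s hs => dampedDeriv_nonneg hG w (hpath s hs.1.le) hξ)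
    simp only [zero_smul, add_zero] at h
    simpa using (hcw w).trans h
  | succ n ih =>
    intro A w hA hsub hw hupper t ht
    have hne : A.Nonempty := Finset.card_pos.1 (by omega)
    obtain ⟨γ, hγA, hmin⟩ := A.exists_min_image (fun γ => ⟪γ, v⟫ / ⟪γ, u⟫) hne
    have hγ := hsub hγA
    have habove : ∀ δ ∈ Rpos0 D, δ ∈ A → δ ≠ γ → ⟪γ, v⟫ / ⟪γ, u⟫ < ⟪δ, v⟫ / ⟪δ, u⟫ :=
      fun δ hδ hδA hne => (hmin δ hδA).lt_of_ne (hv γ hγ δ hδ hne.symm)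
    have hstep := positive_set_step hu' hw hγ hγA (hupper γ hγA) habove
    have hα : w.1 γ ∈ D.Rpos := (hw γ hγ).2 hγA
    have hih := ih (A.erase γ) (D.weylRefl (w.1 γ) * w)
      (by rw [Finset.card_erase_of_mem hγA, hA]; rfl)
      ((Finset.erase_subset _ _).trans hsub) hstep (fun ε hε δ hδ hδA => by
        obtain ⟨hεγ, hεA⟩ := Finset.mem_erase.1 hε
        by_cases hδγ : δ = γ
        · rw [hδγ]
          exact habove ε (hsub hεA) hεA hεγ
        · exact hupper ε hεA δ hδ fun h => hδA (Finset.mem_erase.2 ⟨hδγ, h⟩))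
    set P := c * ∏ γ ∈ A, D.k γ * ⟪γ, ξ⟫ with hP
    have hPe : P = D.k γ * ⟪γ, ξ⟫ * (c * ∏ γ ∈ A.erase γ, D.k γ * ⟪γ, ξ⟫) := by
      rw [hP, ← Finset.mul_prod_erase A _ hγA]
      ring
    have h := le_of_hasDerivAt_nonneg ht
      (f := fun s => damped D G w (u + s • ξ) - P * (s ^ (n + 1) / (n + 1).factorial))
      (f' := fun s => dampedDeriv D G w (u + s • ξ) ξ - P * (s ^ n / n.factorial))
      (fun s hs => ?_) (fun s hs => ?_)
    · have h0 := hc.trans (hcw w)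
      simp only [zero_smul, add_zero, ne_eq, Nat.succ_ne_zero, not_false_eq_true, zero_pow,
        zero_div, mul_zero, sub_zero] at h
      linarith
    · refine (hasDerivAt_damped hG w hu' hξ hs.1).sub ?_
      refine (((hasDerivAt_pow (n + 1) s).div_const _).const_mul P).congr_deriv ?_
      rw [Nat.factorial_succ]
      push_cast
      field_simp
    · have h1 := dampedDeriv_ge hG w (hpath s hs.1.le) hξ hα
      have h2 : ⟪w.1 γ, w.1 ξ⟫ = ⟪γ, ξ⟫ := w.1.inner_map_map γ ξ
      have h3 := hξ γ (Rpos0_subset hγ)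
      rw [h2, D.k_weyl w (Rpos0_mem_R hγ), max_eq_left h3.le] at h1
      have h4 := mul_le_mul_of_nonneg_left (hih s hs.1.le)
        (mul_pos (D.k_pos γ (Rpos0_mem_R hγ)) h3).le
      rw [hPe]
      linarith

lemma exists_lower_bound [Fintype (weylGroup D)] (hG : IsOpdamR D 0 G) :
    ∃ c : ℝ, 0 < c ∧ ∀ x ∈ posChamber D,
      c * ∏ α ∈ Rpos0 D, (1 + ⟪α, x⟫) ≤ ∑ w, weighted D G w x := by
  obtain ⟨u, hu⟩ := D.exists_dominant
  have hu' : u ∈ posChamber D := fun α hα => one_pos.trans_le (hu α hα)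
  obtain ⟨v, hv⟩ := exists_separating hu'
  have hdpos : ∀ w, 0 < damped D G w u := fun w =>
    mul_pos (Real.exp_pos _) (weighted_pos hG hu' w)
  obtain ⟨w₀, hw₀⟩ := Finite.exists_min fun w => damped D G w u
  set c₀ := damped D G w₀ u
  set N := (Rpos0 D).card
  set κ := ∏ γ ∈ Rpos0 D, D.k γ
  have hκ : 0 < κ := Finset.prod_pos fun γ hγ => D.k_pos γ (Rpos0_mem_R hγ)
  refine ⟨Real.exp (-(2 * ⟪rhoHO D, u + u⟫)) * (c₀ * κ * (1 / N.factorial)),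
    mul_pos (Real.exp_pos _) (mul_pos (mul_pos (hdpos w₀) hκ) (by positivity)), fun x hx => ?_⟩
  have hξ : x + u ∈ posChamber D := posChamber_add hx hu'
  have h1 := damped_ge_prod hG (hdpos w₀).le hu hξ hv hw₀ N (Rpos0 D) 1 rfl subset_rfl
    (fun δ hδ => by simpa [hδ] using Rpos0_subset hδ) (fun γ _ δ hδ h => absurd hδ h) 1 zero_le_one
  have hend : u + (1:ℝ) • (x + u) = x + (u + u) := by
    rw [one_smul]
    abel
  rw [hend, one_pow, Finset.prod_mul_distrib] at h1
  have hy : x + (u + u) ∈ posChamber D := posChamber_add hx (posChamber_add hu' hu')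
  have h2 : damped D G 1 (x + (u + u)) ≤ ∑ w, weighted D G w (x + (u + u)) := by
    refine le_trans ?_ (Finset.single_le_sum (fun w _ => (weighted_pos hG hy w).le)
      (Finset.mem_univ (1 : weylGroup D)))
    refine mul_le_of_le_one_left (weighted_pos hG hy _).le (Real.exp_le_one_iff.2 ?_)
    linarith [potential_nonneg (D := D) (x + (u + u))]
  have h3 := (sum_weighted_harnack hG hx (posChamber_add hu' hu')).2
  have h4 : ∏ α ∈ Rpos0 D, (1 + ⟪α, x⟫) ≤ ∏ α ∈ Rpos0 D, ⟪α, x + u⟫ := by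
    refine Finset.prod_le_prod (fun α hα => ?_) (fun α hα => ?_)
    · linarith [hx α (Rpos0_subset hα)]
    · rw [inner_add_right]
      linarith [hu α (Rpos0_subset hα)]
  have h5 : c₀ * κ * (1 / N.factorial) * ∏ α ∈ Rpos0 D, (1 + ⟪α, x⟫) ≤
      c₀ * κ * (1 / N.factorial) * ∏ α ∈ Rpos0 D, ⟪α, x + u⟫ :=
    mul_le_mul_of_nonneg_left h4 (mul_pos (mul_pos (hdpos w₀) hκ) (by positivity)).le
  have h6 : c₀ * κ * (1 / N.factorial) * ∏ α ∈ Rpos0 D, (1 + ⟪α, x⟫) ≤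
      Real.exp (2 * ⟪rhoHO D, u + u⟫) * ∑ w, weighted D G w x := by
    linarith
  have h7 := mul_le_mul_of_nonneg_left h6 (Real.exp_pos (-(2 * ⟪rhoHO D, u + u⟫))).le
  rwa [← mul_assoc, ← mul_assoc (Real.exp _) (Real.exp _), ← Real.exp_add, neg_add_cancel,
    Real.exp_zero, one_mul] at h7

end LowerBound

section UpperBound

variable {D : HOData E} {G : E → ℝ}

/-- The product of the factors `1 + (ε,y)₊` over the positive indivisible roots `ε`. -/
def posProd (D : HOData E) (y : E) : ℝ := ∏ ε ∈ Rpos0 D, (1 + max ⟪ε, y⟫ 0)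

lemma one_add_max_pos (s : ℝ) : 0 < 1 + max s 0 :=
  add_pos_of_pos_of_nonneg one_pos (le_max_right _ _)

lemma posProd_pos (y : E) : 0 < posProd D y :=
  Finset.prod_pos fun _ _ => one_add_max_pos _

lemma mul_posProd_rRefl_le {β y : E} (hβ : β ∈ Rpos0 D) (hy : 0 ≤ ⟪β, y⟫) :
    (1 + ⟪β, y⟫) * posProd D (rRefl β y) ≤ posProd D y := by
  obtain ⟨u, hu⟩ := D.posChamber_nonempty
  have hβR := Rpos0_mem_R hβ
  have hβ0 := D.root_ne_zero β hβR
  set g : E → ℝ := fun ε => 1 + max ⟪ε, y⟫ 0 with hg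
  have hg0 : ∀ ε, 0 ≤ g ε := fun ε => (one_add_max_pos _).le
  set A := (Rpos0 D).filter fun ε => rRefl β ε ∈ D.Rpos with hA
  set B := (Rpos0 D).filter fun ε => rRefl β ε ∉ D.Rpos with hB
  have hAmem : ∀ ε ∈ A, rRefl β ε ∈ A := by
    intro ε hε
    obtain ⟨h1, h2⟩ := Finset.mem_filter.1 hε
    have h3 := weyl_mem_Rpos0_or_neg (D.weylRefl β) h1
    rw [weylRefl_apply hβR] at h3
    refine Finset.mem_filter.2 ⟨?_, ?_⟩
    · exact (h3.resolve_right fun h => h.1 h2).2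
    · rw [rRefl_rRefl hβ0]
      exact Rpos0_subset h1
  have h1 : ∏ ε ∈ A, g (rRefl β ε) = ∏ ε ∈ A, g ε :=
    Finset.prod_nbij' (rRefl β) (rRefl β) hAmem hAmem (fun ε _ => rRefl_rRefl hβ0 ε)
      (fun ε _ => rRefl_rRefl hβ0 ε) (fun _ _ => rfl)
  have hβB : β ∈ B := by
    refine Finset.mem_filter.2 ⟨hβ, ?_⟩
    rw [rRefl_self hβ0]
    exact neg_notMem_Rpos (Rpos0_subset hβ)
  have h2 : (1 + ⟪β, y⟫) * ∏ ε ∈ B, g (rRefl β ε) ≤ ∏ ε ∈ B, g ε := by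
    rw [← Finset.mul_prod_erase B _ hβB, ← Finset.mul_prod_erase B g hβB]
    have e1 : g (rRefl β β) = 1 := by
      simp [hg, rRefl_self hβ0, hy]
    have e2 : g β = 1 + ⟪β, y⟫ := by simp [hg, hy]
    rw [e1, e2, one_mul]
    refine mul_le_mul_of_nonneg_left (Finset.prod_le_prod (fun _ _ => hg0 _) fun ε hε => ?_)
      (by linarith)
    obtain ⟨hε0, hε1⟩ := Finset.mem_filter.1 (Finset.mem_of_mem_erase hε)
    have h3 := inner_neg_of_notMem_Rpos hu (D.refl_mem β hβR ε (Rpos0_mem_R hε0)) hε1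
    have h4 := hu ε (Rpos0_subset hε0)
    have h5 := hu β (Rpos0_subset hβ)
    have hc : 0 < 2 / ⟪β, β⟫ := div_pos two_pos (real_inner_self_pos.2 hβ0)
    rw [inner_rRefl_left, inner_rRefl_right] at h3
    have h6 : 0 < ⟪ε, β⟫ := by
      refine pos_of_mul_pos_right ?_ (mul_pos hc h5).le
      linarith
    simp only [hg]
    gcongr
    rw [inner_rRefl_left, inner_rRefl_right]
    have : 0 ≤ 2 / ⟪β, β⟫ * ⟪β, y⟫ * ⟪ε, β⟫ := by positivity
    linarith
  have e1 : posProd D (rRefl β y) = (∏ ε ∈ A, g (rRefl β ε)) * ∏ ε ∈ B, g (rRefl β ε) := by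
    rw [hA, hB, Finset.prod_filter_mul_prod_filter_not]
    simp only [hg, inner_rRefl_left, posProd]
  have e2 : posProd D y = (∏ ε ∈ A, g ε) * ∏ ε ∈ B, g ε := by
    rw [hA, hB, Finset.prod_filter_mul_prod_filter_not]
    rfl
  rw [e1, e2, h1, mul_left_comm]
  exact mul_le_mul_of_nonneg_left h2 (Finset.prod_nonneg fun _ _ => hg0 _)

lemma exists_pow_le_exp {B : ℝ} (hB : 0 < B) (N : ℕ) :
    ∃ C : ℝ, 0 < C ∧ ∀ s, 0 ≤ s → (1 + B * s) ^ N ≤ C * Real.exp (s / 2) := by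
  refine ⟨(2 * B) ^ N * N.factorial * Real.exp (1 / (2 * B)), by positivity, fun s hs => ?_⟩
  have h := Real.pow_div_factorial_le_exp (x := 1 / (2 * B) + s / 2) (by positivity) N
  rw [div_le_iff₀ (by positivity), Real.exp_add] at h
  have e : 1 + B * s = 2 * B * (1 / (2 * B) + s / 2) := by
    field_simp
  rw [e, mul_pow]
  calc (2 * B) ^ N * (1 / (2 * B) + s / 2) ^ N
      ≤ (2 * B) ^ N * (Real.exp (1 / (2 * B)) * Real.exp (s / 2) * N.factorial) := by gcongr
    _ = _ := by ring

lemma exists_posProd_rRefl_le (D : HOData E) :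
    ∃ C : ℝ, 0 < C ∧ ∀ α ∈ D.R, ∀ y,
      posProd D (rRefl α y) ≤ C * Real.exp (|⟪α, y⟫| / 2) * posProd D y := by
  obtain ⟨B, hB⟩ := ((D.R ×ˢ D.R).image fun p => 2 / ⟪p.1, p.1⟫ * |⟪p.2, p.1⟫|).bddAbove
  obtain ⟨C, hC, hexp⟩ := exists_pow_le_exp (B := max B 1) (by positivity) (Rpos0 D).card
  refine ⟨C, hC, fun α hα y => ?_⟩
  refine le_trans ?_ (mul_le_mul_of_nonneg_right (hexp _ (abs_nonneg ⟪α, y⟫)) (posProd_pos y).le)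
  rw [← Finset.prod_const, posProd, posProd, ← Finset.prod_mul_distrib]
  refine Finset.prod_le_prod (fun _ _ => (one_add_max_pos _).le) fun ε hε => ?_
  have h1 : 2 / ⟪α, α⟫ * |⟪ε, α⟫| ≤ max B 1 :=
    (hB (Finset.mem_coe.2 (Finset.mem_image_of_mem _
      (Finset.mk_mem_product hα (Rpos0_mem_R hε))))).trans (le_max_left _ _)
  have h2 : |2 / ⟪α, α⟫ * ⟪α, y⟫ * ⟪ε, α⟫| ≤ max B 1 * |⟪α, y⟫| := by
    rw [abs_mul, abs_mul, abs_of_nonneg (div_nonneg two_pos.le real_inner_self_nonneg)]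
    have := mul_le_mul_of_nonneg_right h1 (abs_nonneg ⟪α, y⟫)
    linarith
  rw [inner_rRefl_right]
  set b := 2 / ⟪α, α⟫ * ⟪α, y⟫ * ⟪ε, α⟫
  have h3 := neg_le_abs b
  have h4 : max (⟪ε, y⟫ - b) 0 ≤ max ⟪ε, y⟫ 0 + max B 1 * |⟪α, y⟫| :=
    max_le (by linarith [le_max_left ⟪ε, y⟫ 0])
      (add_nonneg (le_max_right _ _) ((abs_nonneg _).trans h2))
  have h5 := mul_nonneg ((abs_nonneg _).trans h2) (le_max_right ⟪ε, y⟫ 0)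
  linarith

lemma one_le_abs_inner_weyl {x : E} (hx : ∀ α ∈ D.Rpos, 1 ≤ ⟪α, x⟫) (w : weylGroup D) {α : E}
    (hα : α ∈ D.R) : 1 ≤ |⟪α, w.1 x⟫| := by
  rw [inner_weyl]
  rcases D.pos_or_neg _ ((D.weyl_mem_iff w⁻¹).2 hα) with h | h
  · exact (hx _ h).trans (le_abs_self _)
  · have := hx _ h
    rw [inner_neg_left] at this
    exact this.trans (neg_le_abs _)

lemma hasDerivAt_posProd (w : weylGroup D) {x₀ ξ : E} (hx₀ : x₀ ∈ posChamber D)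
    (hξ : ξ ∈ posChamber D) {t : ℝ} (ht : 0 ≤ t) :
    HasDerivAt (fun t : ℝ => posProd D (w.1 (x₀ + t • ξ)))
      (posProd D (w.1 (x₀ + t • ξ)) *
        ∑ ε ∈ Rpos0 D, max ⟪ε, w.1 ξ⟫ 0 / (1 + max ⟪ε, w.1 (x₀ + t • ξ)⟫ 0)) t := by
  have hfac : ∀ ε ∈ Rpos0 D, HasDerivAt (fun t : ℝ => 1 + max ⟪ε, w.1 (x₀ + t • ξ)⟫ 0)
      (max ⟪ε, w.1 ξ⟫ 0) t := by
    intro ε hε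
    have h1 : HasDerivAt (fun t : ℝ => ⟪ε, w.1 (x₀ + t • ξ)⟫) ⟪ε, w.1 ξ⟫ t := by
      simpa only [map_add, map_smul] using hasDerivAt_inner_path ε (w.1 x₀) (w.1 ξ) t
    rcases sign_pair w (Rpos0_mem_R hε) (posChamber_add_smul hx₀ hξ ht) hξ with
      ⟨ha, hb⟩ | ⟨ha, hb⟩
    · rw [max_eq_left hb.le]
      refine (h1.const_add 1).congr_of_eventuallyEq ?_
      filter_upwards [h1.continuousAt.eventually (lt_mem_nhds ha)] with s hs
      rw [max_eq_left hs.le]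
    · rw [max_eq_right hb.le]
      refine (hasDerivAt_const t (1:ℝ)).congr_of_eventuallyEq ?_
      filter_upwards [h1.continuousAt.eventually (gt_mem_nhds ha)] with s hs
      rw [max_eq_right hs.le, add_zero]
  refine (HasDerivAt.fun_finsetProd hfac).congr_deriv ?_
  rw [Finset.mul_sum]
  refine Finset.sum_congr rfl fun ε hε => ?_
  have h := one_add_max_pos ⟪ε, w.1 (x₀ + t • ξ)⟫
  rw [posProd, ← Finset.mul_prod_erase _ _ hε, smul_eq_mul]
  field_simp

/-- A supersolution of the system satisfied by the functions `weighted D G w`. -/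
def barrier (D : HOData E) (L K : ℝ) (u : E) (w : weylGroup D) (x : E) : ℝ :=
  Real.exp (L * ⟪u, w.1 u⟫ - K * potential D x) * posProd D (w.1 x)

lemma barrier_pos (L K : ℝ) (u : E) (w : weylGroup D) (x : E) : 0 < barrier D L K u w x :=
  mul_pos (Real.exp_pos _) (posProd_pos _)

/-- The logarithmic derivative of `barrier` in the direction `ξ`. -/
def barrierLogDeriv (D : HOData E) (K : ℝ) (w : weylGroup D) (x ξ : E) : ℝ :=
  (∑ ε ∈ Rpos0 D, max ⟪ε, w.1 ξ⟫ 0 / (1 + max ⟪ε, w.1 x⟫ 0)) +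
    K * ∑ α ∈ D.Rpos, D.k α * (⟪α, ξ⟫ * Real.exp (-⟪α, x⟫ / 2))

lemma hasDerivAt_barrier (L K : ℝ) (u : E) (w : weylGroup D) {x₀ ξ : E}
    (hx₀ : x₀ ∈ posChamber D) (hξ : ξ ∈ posChamber D) {t : ℝ} (ht : 0 ≤ t) :
    HasDerivAt (fun t : ℝ => barrier D L K u w (x₀ + t • ξ))
      (barrier D L K u w (x₀ + t • ξ) * barrierLogDeriv D K w (x₀ + t • ξ) ξ) t := by
  refine (((((hasDerivAt_potential x₀ ξ t).const_mul K).const_sub (L * ⟪u, w.1 u⟫)).exp).mul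
    (hasDerivAt_posProd w hx₀ hξ ht)).congr_deriv ?_
  rw [barrier, barrierLogDeriv]
  ring

/-- Reflecting the barrier costs at most an exponential factor. -/
lemma bose_mul_barrier_le {L K C : ℝ} (hL : 0 ≤ L) {u x : E}
    (hC : ∀ α ∈ D.R, ∀ y, posProd D (rRefl α y) ≤ C * Real.exp (|⟪α, y⟫| / 2) * posProd D y)
    (hx : ∀ α ∈ D.Rpos, 1 ≤ ⟪α, x⟫) (w : weylGroup D) {α : E} (hα : α ∈ D.R) :
    bose |⟪α, w.1 x⟫| * barrier D L K u (D.weylRefl α * w) x ≤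
      2 * C * Real.exp (2 * L * (‖u‖ * ‖u‖)) * Real.exp (-|⟪α, w.1 x⟫| / 2) *
        barrier D L K u w x := by
  have hs := one_le_abs_inner_weyl hx w hα
  have habs : ∀ v : weylGroup D, |⟪u, v.1 u⟫| ≤ ‖u‖ * ‖u‖ := fun v => by
    simpa using abs_real_inner_le_norm u (v.1 u)
  have h1 := abs_le.1 (habs w)
  have h2 := abs_le.1 (habs (D.weylRefl α * w))
  have h3 : Real.exp (L * ⟪u, (D.weylRefl α * w).1 u⟫ - K * potential D x) ≤
      Real.exp (2 * L * (‖u‖ * ‖u‖)) * Real.exp (L * ⟪u, w.1 u⟫ - K * potential D x) := by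
    rw [← Real.exp_add, Real.exp_le_exp]
    nlinarith
  have h4 := hC α hα (w.1 x)
  have h5 : Real.exp (-|⟪α, w.1 x⟫| / 2) =
      Real.exp (-|⟪α, w.1 x⟫|) * Real.exp (|⟪α, w.1 x⟫| / 2) := by
    rw [← Real.exp_add]
    ring_nf
  rw [barrier, barrier, weylRefl_mul_apply hα w x]
  calc _ ≤ 2 * Real.exp (-|⟪α, w.1 x⟫|) * ((Real.exp (2 * L * (‖u‖ * ‖u‖)) *
        Real.exp (L * ⟪u, w.1 u⟫ - K * potential D x)) *
        (C * Real.exp (|⟪α, w.1 x⟫| / 2) * posProd D (w.1 x))) := by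
        have := (posProd_pos (D := D) (rRefl α (w.1 x))).le
        have hb := bose_le hs
        gcongr
    _ = _ := by
        rw [h5]
        ring

/-- Reflecting the barrier in a positive direction gains a factor `e^{-Lε}` and a linear factor. -/
lemma max_mul_barrier_le {L K ε₀ : ℝ} (hL : 0 ≤ L) (hε₀ : 0 ≤ ε₀) {u x ξ : E}
    (hu : ∀ α ∈ D.Rpos, 1 ≤ ⟪α, u⟫) (hx : x ∈ posChamber D) (hξ : ξ ∈ posChamber D)
    (w : weylGroup D) {α : E} (hα : α ∈ D.Rpos) (hεα : ε₀ ≤ 2 / ⟪α, α⟫) :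
    max ⟪α, w.1 ξ⟫ 0 * barrier D L K u (D.weylRefl α * w) x ≤
      2 * Real.exp (-(L * ε₀)) * (barrier D L K u w x *
        ∑ ε ∈ Rpos0 D, max ⟪ε, w.1 ξ⟫ 0 / (1 + max ⟪ε, w.1 x⟫ 0)) := by
  have hαR := D.pos_subset hα
  have hu' : u ∈ posChamber D := fun α hα => one_pos.trans_le (hu α hα)
  have hterm : ∀ ε ∈ Rpos0 D, 0 ≤ max ⟪ε, w.1 ξ⟫ 0 / (1 + max ⟪ε, w.1 x⟫ 0) := fun ε _ =>
    div_nonneg (le_max_right _ _) (one_add_max_pos _).le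
  have hH := barrier_pos L K u w x
  rcases inner_weyl_sign w hαR with hpos | hneg
  swap
  · rw [max_eq_right (hneg ξ hξ).le, zero_mul]
    exact mul_nonneg (by positivity) (mul_nonneg hH.le (Finset.sum_nonneg hterm))
  obtain ⟨β, hβ, hαβ⟩ := D.exists_indivisible hα
  have hrefl : ∀ y, rRefl α y = rRefl β y := by
    rcases hαβ with rfl | rfl
    · exact fun _ => rfl
    · exact rRefl_smul_left two_ne_zero β
  have hβpos : ∀ z ∈ posChamber D, 0 < ⟪β, w.1 z⟫ ∧ ⟪α, w.1 z⟫ ≤ 2 * ⟪β, w.1 z⟫ := by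
    intro z hz
    have := hpos z hz
    rcases hαβ with rfl | rfl
    · exact ⟨this, by linarith⟩
    · simp only [inner_smul_left, conj_trivial] at this ⊢
      exact ⟨by linarith, le_rfl⟩
  have h1 : ⟪u, (D.weylRefl α * w).1 u⟫ ≤ ⟪u, w.1 u⟫ - ε₀ := by
    rw [weylRefl_mul_apply hαR, inner_rRefl_right]
    have h2 : 1 ≤ ⟪α, w.1 u⟫ := by
      simpa [abs_of_pos (hpos u hu')] using one_le_abs_inner_weyl hu w hαR
    have h3 : 1 ≤ ⟪u, α⟫ := by
      rw [real_inner_comm]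
      exact hu α hα
    have h5 := hε₀.trans hεα
    have h4 : ε₀ * 1 * 1 ≤ 2 / ⟪α, α⟫ * ⟪α, w.1 u⟫ * ⟪u, α⟫ := by gcongr
    linarith
  have h2 := mul_posProd_rRefl_le hβ (hβpos x hx).1.le
  rw [← hrefl, ← weylRefl_mul_apply hαR] at h2
  have h3 : (1 + ⟪β, w.1 x⟫) * barrier D L K u (D.weylRefl α * w) x ≤
      Real.exp (-(L * ε₀)) * barrier D L K u w x := by
    rw [barrier, barrier, mul_left_comm, ← mul_assoc (Real.exp (-(L * ε₀))), ← Real.exp_add]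
    refine mul_le_mul (Real.exp_le_exp.2 ?_) h2 ?_ (Real.exp_pos _).le
    · nlinarith
    · exact mul_nonneg (by linarith [(hβpos x hx).1]) (posProd_pos _).le
  have h4 := Finset.single_le_sum hterm hβ
  have hx1 := (hβpos x hx).1
  have hξ1 := (hβpos ξ hξ).1
  rw [max_eq_left hx1.le, max_eq_left hξ1.le] at h4
  rw [max_eq_left (hpos ξ hξ).le]
  have h5 : barrier D L K u (D.weylRefl α * w) x ≤
      Real.exp (-(L * ε₀)) * barrier D L K u w x / (1 + ⟪β, w.1 x⟫) := by
    rw [le_div_iff₀ (by linarith)]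
    linarith
  calc ⟪α, w.1 ξ⟫ * barrier D L K u (D.weylRefl α * w) x
      ≤ (2 * ⟪β, w.1 ξ⟫) * (Real.exp (-(L * ε₀)) * barrier D L K u w x / (1 + ⟪β, w.1 x⟫)) :=
        mul_le_mul (hβpos ξ hξ).2 h5 (barrier_pos _ _ _ _ _).le (by linarith)
    _ = 2 * Real.exp (-(L * ε₀)) * (barrier D L K u w x *
        (⟪β, w.1 ξ⟫ / (1 + ⟪β, w.1 x⟫))) := by ring
    _ ≤ _ := by gcongr

lemma exists_drift_barrier_le {u : E} (hu : ∀ α ∈ D.Rpos, 1 ≤ ⟪α, u⟫) :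
    ∃ L K : ℝ, 0 ≤ L ∧ 0 ≤ K ∧ ∀ x, (∀ α ∈ D.Rpos, 1 ≤ ⟪α, x⟫) → ∀ ξ ∈ posChamber D, ∀ w,
      drift D (fun v => barrier D L K u v x) w x ξ ≤
        barrier D L K u w x * barrierLogDeriv D K w x ξ := by
  obtain ⟨C, hC, hCle⟩ := exists_posProd_rRefl_le D
  obtain ⟨ε₀, hε₀, hε⟩ : ∃ ε₀ : ℝ, 0 < ε₀ ∧ ∀ α ∈ D.Rpos, ε₀ ≤ 2 / ⟪α, α⟫ := by
    obtain ⟨B, hB⟩ := (D.Rpos.image fun α => ⟪α, α⟫).bddAbove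
    refine ⟨2 / max B 1, by positivity, fun α hα => ?_⟩
    have h1 : ⟪α, α⟫ ≤ B := hB (Finset.mem_coe.2 (Finset.mem_image_of_mem _ hα))
    have h2 : 0 < ⟪α, α⟫ := real_inner_self_pos.2 (D.root_ne_zero α (D.pos_subset hα))
    have h3 := h1.trans (le_max_left B 1)
    gcongr
  set κ := ∑ α ∈ D.Rpos, D.k α with hκ
  have hκ0 : 0 ≤ κ := Finset.sum_nonneg fun α hα => (k_pos' hα).le
  set L := 2 * κ / ε₀ with hL
  have hL0 : 0 ≤ L := by positivity
  set K := 2 * C * Real.exp (2 * L * (‖u‖ * ‖u‖)) with hK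
  refine ⟨L, K, hL0, by positivity, fun x hx ξ hξ w => ?_⟩
  have hx' : x ∈ posChamber D := fun α hα => one_pos.trans_le (hx α hα)
  set H := barrier D L K u w x with hH
  have hH0 : 0 < H := barrier_pos _ _ _ _ _
  set S := ∑ ε ∈ Rpos0 D, max ⟪ε, w.1 ξ⟫ 0 / (1 + max ⟪ε, w.1 x⟫ 0) with hS
  have hS0 : 0 ≤ S := Finset.sum_nonneg fun ε _ =>
    div_nonneg (le_max_right _ _) (one_add_max_pos _).le
  have hη : κ * (2 * Real.exp (-(L * ε₀))) ≤ 1 := by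
    have e : L * ε₀ = 2 * κ := by
      rw [hL]
      field_simp
    have h1 := Real.add_one_le_exp (2 * κ)
    rw [e, Real.exp_neg, ← mul_assoc, ← div_eq_mul_inv, div_le_one (Real.exp_pos _)]
    linarith
  calc drift D (fun v => barrier D L K u v x) w x ξ
      ≤ ∑ α ∈ D.Rpos, (D.k α * (|⟪α, w.1 ξ⟫| * Real.exp (-|⟪α, w.1 x⟫| / 2)) * (K * H) +
          D.k α * (2 * Real.exp (-(L * ε₀)) * (H * S))) := by
        refine Finset.sum_le_sum fun α hα => ?_
        have h1 := bose_mul_barrier_le (K := K) (u := u) hL0 hCle hx w (D.pos_subset hα)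
        have h2 := max_mul_barrier_le (K := K) hL0 hε₀.le hu hx' hξ w hα (hε α hα)
        have h3 : 0 ≤ bose |⟪α, w.1 x⟫| * H :=
          mul_nonneg (bose_pos (abs_inner_weyl_pos w (D.pos_subset hα) hx')).le hH0.le
        have h4 := mul_le_mul_of_nonneg_left (h1.trans (le_add_of_nonneg_right h3))
          (abs_nonneg ⟪α, w.1 ξ⟫)
        rw [mul_assoc (D.k α) _ (K * H), ← mul_add]
        refine mul_le_mul_of_nonneg_left ?_ (k_pos' hα).le
        rw [← hK] at h4
        linarith
    _ = H * (K * ∑ α ∈ D.Rpos, D.k α * (|⟪α, w.1 ξ⟫| * Real.exp (-|⟪α, w.1 x⟫| / 2))) +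
          κ * (2 * Real.exp (-(L * ε₀))) * (H * S) := by
        rw [Finset.sum_add_distrib, ← Finset.sum_mul, ← Finset.sum_mul]
        ring
    _ ≤ H * (K * ∑ α ∈ D.Rpos, D.k α * (|⟪α, w.1 ξ⟫| * Real.exp (-|⟪α, w.1 x⟫| / 2))) +
          1 * (H * S) := by gcongr
    _ = _ := by
        rw [sum_k_weyl (fun a b => b * Real.exp (-a / 2)) w hx' hξ, barrierLogDeriv]
        ring

lemma drift_mul_sub (C : ℝ) (f g : weylGroup D → ℝ) (w : weylGroup D) (x ξ : E) :
    drift D (fun v => C * f v - g v) w x ξ = C * drift D f w x ξ - drift D g w x ξ := by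
  simp only [drift, Finset.mul_sum, ← Finset.sum_sub_distrib]
  exact Finset.sum_congr rfl fun α _ => by ring

lemma posProd_weyl_le {x : E} (hx : x ∈ posChamber D) (w : weylGroup D) :
    posProd D (w.1 x) ≤ ∏ α ∈ Rpos0 D, (1 + ⟪α, x⟫) := by
  calc posProd D (w.1 x) ≤ ∏ α ∈ Rpos0 D, (1 + |⟪(w⁻¹).1 α, x⟫|) := by
        refine Finset.prod_le_prod (fun _ _ => (one_add_max_pos _).le) fun α _ => ?_
        rw [← inner_weyl]
        gcongr
        exact max_le (le_abs_self _) (abs_nonneg _)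
    _ = ∏ α ∈ Rpos0 D, (1 + |⟪α, x⟫|) :=
        D.prod_Rpos0_weyl (fun α => 1 + |⟪α, x⟫|) (fun α _ => by simp) w⁻¹
    _ = _ := Finset.prod_congr rfl fun α hα => by rw [abs_of_pos (hx α (Rpos0_subset hα))]

lemma exists_upper_bound [Fintype (weylGroup D)] (hG : IsOpdamR D 0 G) :
    ∃ C : ℝ, ∀ x ∈ posChamber D,
      ∑ w, weighted D G w x ≤ C * ∏ α ∈ Rpos0 D, (1 + ⟪α, x⟫) := by
  obtain ⟨u, hu⟩ := D.exists_dominant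
  have hu' : u ∈ posChamber D := fun α hα => one_pos.trans_le (hu α hα)
  obtain ⟨L, K, hL, hK, hdrift⟩ := exists_drift_barrier_le hu
  obtain ⟨w₀, hw₀⟩ := Finite.exists_max fun w => weighted D G w u / barrier D L K u w u
  set C₁ := weighted D G w₀ u / barrier D L K u w₀ u + 1 with hC₁
  have hC₁0 : 0 < C₁ :=
    add_pos (div_pos (weighted_pos hG hu' w₀) (barrier_pos _ _ _ _ _)) one_pos
  set M := Real.exp (L * (‖u‖ * ‖u‖)) with hM
  set Q := ∏ α ∈ Rpos0 D, (1 + ⟪α, u⟫) with hQ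
  refine ⟨Fintype.card (weylGroup D) * (C₁ * M * Q), fun x hx => ?_⟩
  have hcmp := pos_of_drift_le (T := 1) hu' hx
    (d := fun w t => C₁ * barrier D L K u w (u + t • x) - weighted D G w (u + t • x))
    (d' := fun w t => C₁ * (barrier D L K u w (u + t • x) * barrierLogDeriv D K w (u + t • x) x) -
      drift D (fun v => weighted D G v (u + t • x)) w (u + t • x) x)
    (fun w t ht => ((hasDerivAt_barrier L K u w hu' hx ht.1).const_mul C₁).sub
      (hasDerivAt_weighted hG w hu' hx ht.1))
    (fun w t ht => ?_) (fun w => ?_) 1 ⟨zero_le_one, le_rfl⟩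
  · simp only [one_smul] at hcmp
    have hux : x + u ∈ posChamber D := posChamber_add hx hu'
    have hprod : ∏ α ∈ Rpos0 D, (1 + ⟪α, x + u⟫) ≤ Q * ∏ α ∈ Rpos0 D, (1 + ⟪α, x⟫) := by
      rw [hQ, ← Finset.prod_mul_distrib]
      refine Finset.prod_le_prod (fun α hα => ?_) fun α hα => ?_
      · linarith [hux α (Rpos0_subset hα)]
      · rw [inner_add_right]
        have := mul_pos (hu' α (Rpos0_subset hα)) (hx α (Rpos0_subset hα))
        linarith
    have hw : ∀ w, weighted D G w (x + u) ≤ C₁ * M * Q * ∏ α ∈ Rpos0 D, (1 + ⟪α, x⟫) := by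
      intro w
      have h1 := hcmp w
      rw [add_comm u x] at h1
      have h2 : barrier D L K u w (x + u) ≤ M * (Q * ∏ α ∈ Rpos0 D, (1 + ⟪α, x⟫)) := by
        refine mul_le_mul (Real.exp_le_exp.2 ?_) ((posProd_weyl_le hux w).trans hprod)
          (posProd_pos _).le (Real.exp_pos _).le
        have h3 : ⟪u, w.1 u⟫ ≤ ‖u‖ * ‖u‖ := by simpa using real_inner_le_norm u (w.1 u)
        have h4 := mul_le_mul_of_nonneg_left h3 hL
        have h5 := mul_nonneg hK (potential_nonneg (D := D) (x + u))
        linarith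
      have h3 := mul_le_mul_of_nonneg_left h2 hC₁0.le
      linarith
    refine (sum_weighted_harnack hG hx hu').1.trans ((Finset.sum_le_sum fun w _ => hw w).trans ?_)
    rw [Finset.sum_const, nsmul_eq_mul, Finset.card_univ, mul_assoc (Fintype.card _ : ℝ)]
  · rw [drift_mul_sub]
    refine sub_le_sub_right (mul_le_mul_of_nonneg_left (hdrift _ (fun α hα => ?_) x hx w)
      hC₁0.le) _
    rw [inner_add_right, inner_smul_right]
    have := mul_nonneg ht.1 (hx α hα).le
    linarith [hu α hα]
  · simp only [zero_smul, add_zero, sub_pos]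
    rw [← div_lt_iff₀ (barrier_pos _ _ _ _ _)]
    exact (hw₀ w).trans_lt (lt_add_one _)

lemma Fsym_eq_weighted [Fintype (weylGroup D)] (G : E → ℝ) (x : E) :
    Fsym D G x = (Fintype.card (weylGroup D) : ℝ)⁻¹ * Real.exp (-⟪rhoHO D, x⟫) *
      ∑ w, weighted D G w x := by
  simp only [Fsym, weighted, ← Finset.mul_sum]
  rw [mul_assoc, ← mul_assoc (Real.exp _), ← Real.exp_add, neg_add_cancel, Real.exp_zero, one_mul]

lemma continuous_Fsym [Fintype (weylGroup D)] (hG : IsOpdamR D 0 G) : Continuous (Fsym D G) :=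
  continuous_const.mul (continuous_finsetSum _ fun w _ =>
    (continuousOn_univ.1 hG.1.continuousOn).comp w.1.continuous)

end UpperBound

end HOData

/-- sharp global estimate of `F₀` on the closed positive Weyl chamber:
`F₀(x) ≍ e^{-(ρ,x)} Π_{α ∈ R₀⁺} (1 + (α,x))`. -/
theorem statement6 (D : HOData E) [Fintype (weylGroup D)] (Gzero : E → ℝ)
    (hG0 : IsOpdamR D 0 Gzero) :
    ∃ C c : ℝ, 0 < c ∧ c ≤ C ∧ ∀ x ∈ closure (posChamber D),
      c * (Real.exp (-⟪rhoHO D, x⟫) * ∏ α ∈ Rpos0 D, (1 + ⟪α, x⟫)) ≤ Fsym D Gzero x ∧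
      Fsym D Gzero x ≤ C * (Real.exp (-⟪rhoHO D, x⟫) * ∏ α ∈ Rpos0 D, (1 + ⟪α, x⟫)) := by
  obtain ⟨c, hc, hlow⟩ := HOData.exists_lower_bound hG0
  obtain ⟨C, hup⟩ := HOData.exists_upper_bound hG0
  set n := (Fintype.card (weylGroup D) : ℝ)⁻¹
  have hn : 0 < n := inv_pos.2 (Nat.cast_pos.2 Fintype.card_pos)
  refine ⟨n * max C c, n * c, mul_pos hn hc,
    mul_le_mul_of_nonneg_left (le_max_right _ _) hn.le, fun x hx => ?_⟩
  have hF := HOData.continuous_Fsym hG0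
  have hP : Continuous fun x => Real.exp (-⟪rhoHO D, x⟫) * ∏ α ∈ Rpos0 D, (1 + ⟪α, x⟫) := by
    fun_prop
  refine closure_minimal (s := posChamber D) (fun y hy => ?_)
    ((isClosed_le (hP.const_mul _) hF).inter
      (isClosed_le hF (hP.const_mul _))) hx
  have hpos : 0 ≤ ∏ α ∈ Rpos0 D, (1 + ⟪α, y⟫) := Finset.prod_nonneg fun α hα => by
    linarith [hy α (HOData.Rpos0_subset hα)]
  have h1 := hlow y hy
  have h2 := (hup y hy).trans (mul_le_mul_of_nonneg_right (le_max_left C c) hpos)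
  have h3 : 0 ≤ n * Real.exp (-⟪rhoHO D, y⟫) := by positivity
  have h4 := mul_le_mul_of_nonneg_left h1 h3
  have h5 := mul_le_mul_of_nonneg_left h2 h3
  rw [← HOData.Fsym_eq_weighted] at h4 h5
  simp only [Set.mem_inter_iff, Set.mem_ofPred_eq]
  constructor <;> linarith
end
end
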